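/- arXiv:2011.07877 — 14 statements merged into one kernel-verified Lean document; each statement's English description precedes it below -/
import Mathlib

section
/- Let b > 0 be a real number and let f : ℂ → ℂ be any function satisfying the difference equation f(z + ib/2) = 2·cosh(π b z)·f(z − ib/2) for all z ∈ ℂ (this is the difference equation satisfied by the double sine function s_b). Then for every natural number m and every x ∈ ℂ one has f(x + i m b) = e^{i π b² m²/2} · e^{π b m x} · (−e^{−iπb²} e^{−2πbx} ; e^{−2iπb²})_m · f(x). -/
open Complex

/-- The `q`-Pochhammer symbol `(a;q)_m = ∏_{j=0}^{m-1} (1 - a q^j)`. -/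
noncomputable def qPoch (a q : ℂ) (m : ℕ) : ℂ := ∏ j ∈ Finset.range m, (1 - a * q ^ j)

/-- Lemma 5.1 of the paper: any function satisfying the defining difference equation of the
double sine function `s_b` satisfies
`f(x + i m b) = e^{iπb²m²/2} e^{πbmx} (−e^{−iπb²}e^{−2πbx}; e^{−2iπb²})_m f(x)`. -/
theorem stmt0 (b : ℝ) (hb : 0 < b) (f : ℂ → ℂ)
    (hf : ∀ z : ℂ, f (z + I * b / 2) = 2 * Complex.cosh (Real.pi * b * z) * f (z - I * b / 2)) :
    ∀ (m : ℕ) (x : ℂ),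
      f (x + I * m * b) =
        Complex.exp (I * Real.pi * b ^ 2 * m ^ 2 / 2) * Complex.exp (Real.pi * b * m * x) *
          qPoch (-Complex.exp (-(I * Real.pi * b ^ 2)) * Complex.exp (-(2 * Real.pi * b * x)))
            (Complex.exp (-(2 * I * Real.pi * b ^ 2))) m * f x := by
  intro m
  induction m with
  | zero => intro x; simp [qPoch]
  | succ m ih =>
    intro x
    have h := hf (x + I * m * b + I * b / 2)
    have e1 : x + I * m * b + I * b / 2 + I * b / 2 = x + I * ((m + 1 : ℕ) : ℂ) * b := by
      push_cast; ring
    have e2 : x + I * m * b + I * b / 2 - I * b / 2 = x + I * m * b := by ring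
    rw [e1, e2, ih x] at h
    rw [h]
    have key : 2 * Complex.cosh (Real.pi * b * (x + I * m * b + I * b / 2)) =
        Complex.exp (Real.pi * b * (x + I * m * b + I * b / 2)) *
          (1 - (-Complex.exp (-(I * Real.pi * b ^ 2)) * Complex.exp (-(2 * Real.pi * b * x))) *
            Complex.exp (-(2 * I * Real.pi * b ^ 2)) ^ m) := by
      rw [Complex.two_cosh, ← Complex.exp_nat_mul, neg_mul, neg_mul, sub_neg_eq_add, mul_add (Complex.exp _) 1,
        mul_one, ← Complex.exp_add, ← Complex.exp_add, ← Complex.exp_add]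
      congr 2
      ring
    have e3 : Complex.exp (I * Real.pi * b ^ 2 * ((m + 1 : ℕ) : ℂ) ^ 2 / 2) *
        Complex.exp (Real.pi * b * ((m + 1 : ℕ) : ℂ) * x) =
        Complex.exp (Real.pi * b * (x + I * m * b + I * b / 2)) *
        (Complex.exp (I * Real.pi * b ^ 2 * m ^ 2 / 2) * Complex.exp (Real.pi * b * m * x)) := by
      rw [← Complex.exp_add, ← Complex.exp_add, ← Complex.exp_add]
      congr 1
      push_cast
      ring
    rw [key, e3, qPoch, qPoch, Finset.prod_range_succ]
    ring
end

section
/- Let n ≥ 1 be an integer and let q, α, β, γ, z ∈ ℂ be nonzero. Assume q^j ≠ 1 for all integers 1 ≤ j ≤ n, and assume βγ ≠ q^i and αγ ≠ q^i for all integers i with 1−n ≤ i ≤ 0. Then ∑_{m=0}^{n} q^{−m} · (q^{n+1−m}, q^{1−m}/(γz), q^{1−m} z/γ ; q)_m / (q^{−m}, q^{1−m}/(βγ), q^{1−m}/(αγ) ; q)_m = ∑_{m=0}^{n} [(q^{−n};q)_m (γz;q)_m (γ z^{−1};q)_m / ((q;q)_m (βγ;q)_m (αγ;q)_m)] · (αβ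 q^{n})^{m}. -/
theorem qPoch_rev (q y : ℂ) (hq : q ≠ 0) (m : ℕ) :
    qPoch (q ^ (1 - (m : ℤ)) * y) q m = ∏ i ∈ Finset.range m, (1 - y * (q ^ i)⁻¹) := by
  unfold qPoch
  rw [← Finset.prod_range_reflect]
  refine Finset.prod_congr rfl fun i hi => ?_
  have him : i < m := Finset.mem_range.mp hi
  have h : q ^ (1 - (m : ℤ)) * q ^ (m - 1 - i) = (q ^ i)⁻¹ := by
    rw [← zpow_natCast q (m - 1 - i), ← zpow_natCast q i, ← zpow_neg, ← zpow_add₀ hq]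
    congr 1
    omega
  rw [← h]
  ring

theorem factor_rev (x Q : ℂ) (hx : x ≠ 0) (hQ : Q ≠ 0) :
    1 - x⁻¹ * Q⁻¹ = (-(x * Q)⁻¹) * (1 - x * Q) := by
  field_simp
  ring

theorem factor_eq (q α β γ z Q N : ℂ) (hq : q ≠ 0) (hα : α ≠ 0) (hβ : β ≠ 0) (hγ : γ ≠ 0)
    (hz : z ≠ 0) (hQ : Q ≠ 0) (hN : N ≠ 0) :
    q⁻¹ * ((1 - N * Q⁻¹) * (1 - (γ * z)⁻¹ * Q⁻¹) * (1 - (γ * z⁻¹)⁻¹ * Q⁻¹)) /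
      ((1 - q⁻¹ * Q⁻¹) * (1 - (β * γ)⁻¹ * Q⁻¹) * (1 - (α * γ)⁻¹ * Q⁻¹)) =
    ((1 - N⁻¹ * Q) * (1 - γ * z * Q) * (1 - γ * z⁻¹ * Q)) /
      ((1 - q * Q) * (1 - β * γ * Q) * (1 - α * γ * Q)) * (α * β * N) := by
  have hN' : 1 - N * Q⁻¹ = -(N * Q⁻¹) * (1 - N⁻¹ * Q) := by
    field_simp
    ring
  rw [hN', factor_rev (γ * z) Q (by simp [*]) hQ, factor_rev (γ * z⁻¹) Q (by simp [*]) hQ,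
    factor_rev q Q hq hQ, factor_rev (β * γ) Q (by simp [*]) hQ,
    factor_rev (α * γ) Q (by simp [*]) hQ]
  generalize 1 - N⁻¹ * Q = a
  generalize 1 - γ * z * Q = b
  generalize 1 - γ * z⁻¹ * Q = c
  generalize 1 - q * Q = d
  generalize 1 - β * γ * Q = e
  generalize 1 - α * γ * Q = f
  simp only [div_eq_mul_inv, mul_inv, inv_neg, inv_inv]
  generalize d⁻¹ = d'
  generalize e⁻¹ = e'
  generalize f⁻¹ = f'
  field_simp

/-- Case `k = 1` of Lemma 5.2 of the paper:
`Σ_{n,1} = ₃φ₂(q^{−n}, γz, γz^{−1}; βγ, αγ; q; αβq^{n})` as terminating sums. -/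
theorem stmt1 (n : ℕ) (hn : 1 ≤ n) (q α β γ z : ℂ)
    (hq : q ≠ 0) (hα : α ≠ 0) (hβ : β ≠ 0) (hγ : γ ≠ 0) (hz : z ≠ 0)
    (hq1 : ∀ j : ℕ, 1 ≤ j → j ≤ n → q ^ j ≠ 1)
    (hβγ : ∀ i : ℤ, 1 - (n : ℤ) ≤ i → i ≤ 0 → β * γ ≠ q ^ i)
    (hαγ : ∀ i : ℤ, 1 - (n : ℤ) ≤ i → i ≤ 0 → α * γ ≠ q ^ i) :
    ∑ m ∈ Finset.range (n + 1),
        q ^ (-(m : ℤ)) *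
          (qPoch (q ^ ((n : ℤ) + 1 - (m : ℤ))) q m *
            qPoch (q ^ (1 - (m : ℤ)) / (γ * z)) q m *
            qPoch (q ^ (1 - (m : ℤ)) * z / γ) q m) /
          (qPoch (q ^ (-(m : ℤ))) q m * qPoch (q ^ (1 - (m : ℤ)) / (β * γ)) q m *
            qPoch (q ^ (1 - (m : ℤ)) / (α * γ)) q m)
      = ∑ m ∈ Finset.range (n + 1),
          (qPoch (q ^ (-(n : ℤ))) q m * qPoch (γ * z) q m * qPoch (γ * z⁻¹) q m) /
            (qPoch q q m * qPoch (β * γ) q m * qPoch (α * γ) q m) * (α * β * q ^ n) ^ m := by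
  refine Finset.sum_congr rfl fun m _ => ?_
  have e1 : q ^ ((n : ℤ) + 1 - (m : ℤ)) = q ^ (1 - (m : ℤ)) * q ^ n := by
    rw [← zpow_natCast q n, ← zpow_add₀ hq]
    congr 1
    ring
  have e2 : q ^ (1 - (m : ℤ)) * z / γ = q ^ (1 - (m : ℤ)) * (γ * z⁻¹)⁻¹ := by
    field_simp
  have e3 : q ^ (-(m : ℤ)) = q ^ (1 - (m : ℤ)) * q⁻¹ := by
    rw [← zpow_neg_one q, ← zpow_add₀ hq]
    congr 1
    ring
  have e4 : q ^ (-(m : ℤ)) = ∏ _i ∈ Finset.range m, q⁻¹ := by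
    simp
  have e5 : qPoch (q ^ (-(m : ℤ))) q m = ∏ i ∈ Finset.range m, (1 - q⁻¹ * (q ^ i)⁻¹) := by
    rw [e3, qPoch_rev q _ hq]
  have e6 : (α * β * q ^ n) ^ m = ∏ _i ∈ Finset.range m, (α * β * q ^ n) := by
    simp
  rw [e5, e4, e6, e1, e2, div_eq_mul_inv _ (γ * z), div_eq_mul_inv _ (β * γ),
    div_eq_mul_inv _ (α * γ)]
  simp only [qPoch_rev q _ hq]
  unfold qPoch
  simp only [← Finset.prod_mul_distrib, ← Finset.prod_div_distrib]
  refine Finset.prod_congr rfl fun i _ => ?_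
  rw [zpow_neg, zpow_natCast]
  exact factor_eq q α β γ z (q ^ i) (q ^ n) hq hα hβ hγ hz (pow_ne_zero _ hq) (pow_ne_zero _ hq)
end

section
/- Let n ≥ 1 be an integer and let q, α, β, γ, x ∈ ℂ be nonzero. Assume q^j ≠ 1 for all integers 1 ≤ j ≤ n, and assume α ≠ q^{−i} and γ ≠ q^{−i} for all integers 1 ≤ i ≤ n. Then ∑_{m=0}^{n} q^{−m} (xβ/γ)^{m} · (q^{n+1−m}, q^{−m−n}/(αβ), q^{1−m}/x ; q)_m / (q^{−m}/α, q^{−m}/γ, q^{−m} ; q)_m = ∑_{m=0}^{n} [(q^{−n};q)_m (αβ q^{n+1};q)_m (x;q)_m / ((q;q)_m (αq;q)_m (γq;q)_m)] · q^{m}, the right-hand side being the terminating big q-Jacobi polynomial J_n(x;α,β,γ;q). -/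
theorem qPoch_reverse (q a : ℂ) (hq : q ≠ 0) (ha : a ≠ 0) (m : ℕ) :
    qPoch (q ^ (1 - (m : ℤ)) / a) q m
      = (∏ j ∈ Finset.range m, (-(q ^ j)⁻¹)) * qPoch a q m / a ^ m := by
  have h : a ^ m = ∏ _j ∈ Finset.range m, a := by simp
  unfold qPoch
  rw [h, ← Finset.prod_mul_distrib, ← Finset.prod_div_distrib,
    ← Finset.prod_range_reflect]
  refine Finset.prod_congr rfl fun j hj => ?_
  have hj' : j + 1 ≤ m := Finset.mem_range.mp hj
  have e : q ^ (1 - (m : ℤ)) * q ^ (m - 1 - j) = (q ^ j)⁻¹ := by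
    rw [← zpow_natCast q (m - 1 - j), ← zpow_natCast q j, ← zpow_neg, ← zpow_add₀ hq]
    congr 1
    omega
  have hqj : q ^ j ≠ 0 := pow_ne_zero _ hq
  rw [div_mul_eq_mul_div, e]
  field_simp
  ring

/-- Case `k = 2` of Lemma 6.2 of the paper: the sum `Σ_{n,2}` equals the terminating
big `q`-Jacobi polynomial `J_n(x;α,β,γ;q)`. -/
theorem stmt3 (n : ℕ) (hn : 1 ≤ n) (q α β γ x : ℂ)
    (hq : q ≠ 0) (hα : α ≠ 0) (hβ : β ≠ 0) (hγ : γ ≠ 0) (hx : x ≠ 0)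
    (hq1 : ∀ j : ℕ, 1 ≤ j → j ≤ n → q ^ j ≠ 1)
    (hαq : ∀ i : ℤ, 1 ≤ i → i ≤ (n : ℤ) → α ≠ q ^ (-i))
    (hγq : ∀ i : ℤ, 1 ≤ i → i ≤ (n : ℤ) → γ ≠ q ^ (-i)) :
    ∑ m ∈ Finset.range (n + 1),
        q ^ (-(m : ℤ)) * (x * β / γ) ^ m *
          (qPoch (q ^ ((n : ℤ) + 1 - (m : ℤ))) q m *
            qPoch (q ^ (-(m : ℤ) - (n : ℤ)) / (α * β)) q m *
            qPoch (q ^ (1 - (m : ℤ)) / x) q m) /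
          (qPoch (q ^ (-(m : ℤ)) / α) q m * qPoch (q ^ (-(m : ℤ)) / γ) q m *
            qPoch (q ^ (-(m : ℤ))) q m)
      = ∑ m ∈ Finset.range (n + 1),
          (qPoch (q ^ (-(n : ℤ))) q m * qPoch (α * β * q ^ (n + 1)) q m * qPoch x q m) /
            (qPoch q q m * qPoch (α * q) q m * qPoch (γ * q) q m) * q ^ m := by
  refine Finset.sum_congr rfl fun m _ => ?_
  have h1 : q ^ ((n : ℤ) + 1 - (m : ℤ)) = q ^ (1 - (m : ℤ)) / q ^ (-(n : ℤ)) := by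
    rw [← zpow_sub₀ hq]; congr 1; ring
  have h2 : q ^ (-(m : ℤ) - (n : ℤ)) / (α * β)
      = q ^ (1 - (m : ℤ)) / (α * β * q ^ (n + 1)) := by
    have : q ^ (-(m : ℤ) - (n : ℤ)) = q ^ (1 - (m : ℤ)) / q ^ (n + 1) := by
      rw [← zpow_natCast q (n + 1), ← zpow_sub₀ hq]; congr 1; push_cast; ring
    rw [this, div_div, mul_comm (q ^ (n + 1))]
  have h0 : q ^ (-(m : ℤ)) = q ^ (1 - (m : ℤ)) / q := by
    rw [div_eq_mul_inv, ← zpow_sub_one₀ hq]; congr 1; ring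
  have h3 : ∀ a : ℂ, q ^ (-(m : ℤ)) / a = q ^ (1 - (m : ℤ)) / (a * q) := by
    intro a
    rw [h0, div_div, mul_comm q]
  have hqn : q ^ (-(n : ℤ)) ≠ 0 := zpow_ne_zero _ hq
  have hqn1 : q ^ (n + 1) ≠ 0 := pow_ne_zero _ hq
  have hc : (∏ j ∈ Finset.range m, (-(q ^ j)⁻¹)) ≠ 0 :=
    Finset.prod_ne_zero_iff.mpr fun j _ => neg_ne_zero.mpr (inv_ne_zero (pow_ne_zero _ hq))
  have hm : q ^ (-(m : ℤ)) = (q ^ m)⁻¹ := by rw [zpow_neg, zpow_natCast]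
  have hn' : (q ^ (-(n : ℤ))) ^ m * (q ^ (n + 1)) ^ m = q ^ m := by
    rw [← mul_pow, zpow_neg, zpow_natCast, pow_succ, inv_mul_cancel_left₀ (pow_ne_zero _ hq)]
  have h4 : qPoch (q ^ (-(m : ℤ))) q m = qPoch (q ^ (1 - (m : ℤ)) / q) q m := by rw [h0]
  rw [h4, h1, h2, h3 α, h3 γ, qPoch_reverse q _ hq hqn, qPoch_reverse q _ hq hx,
    qPoch_reverse q _ hq hq, qPoch_reverse q _ hq (mul_ne_zero hα hq),
    qPoch_reverse q _ hq (mul_ne_zero hγ hq),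
    qPoch_reverse q _ hq (mul_ne_zero (mul_ne_zero hα hβ) hqn1), hm]
  generalize (∏ j ∈ Finset.range m, (-(q ^ j)⁻¹)) = c at *
  generalize qPoch (q ^ (-(n : ℤ))) q m = A1
  generalize qPoch (α * β * q ^ (n + 1)) q m = A2
  generalize qPoch x q m = A3
  generalize qPoch q q m = B1
  generalize qPoch (α * q) q m = B2
  generalize qPoch (γ * q) q m = B3
  simp only [mul_pow, div_pow]
  have hu : (q ^ (-(n : ℤ))) ^ m ≠ 0 := pow_ne_zero _ hqn
  have hv : (q ^ (n + 1)) ^ m ≠ 0 := pow_ne_zero _ hqn1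
  generalize (q ^ (-(n : ℤ))) ^ m = u at *
  generalize (q ^ (n + 1)) ^ m = v at *
  have hQ : q ^ m ≠ 0 := pow_ne_zero _ hq
  have hX : x ^ m ≠ 0 := pow_ne_zero _ hx
  have hA : α ^ m ≠ 0 := pow_ne_zero _ hα
  have hB : β ^ m ≠ 0 := pow_ne_zero _ hβ
  have hG : γ ^ m ≠ 0 := pow_ne_zero _ hγ
  generalize q ^ m = Q at *
  generalize x ^ m = X at *
  generalize α ^ m = A at *
  generalize β ^ m = B at *
  generalize γ ^ m = G at *
  subst hn'
  field_simp
end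

section
/- Let n ≥ 0 be an integer and let q, α, β, γ, z ∈ ℂ be nonzero. Assume q^j ≠ 1 for all integers 1 ≤ j ≤ n, and assume αβ ≠ q^{−i} and αγ ≠ q^{−i} for all integers 0 ≤ i ≤ n−1. Then ∑_{m=0}^{n} [(q^{n};q^{−1})_m (α^{−1}z;q^{−1})_m (α^{−1}z^{−1};q^{−1})_m / ((q^{−1};q^{−1})_m ((αβ)^{−1};q^{−1})_m ((αγ)^{−1};q^{−1})_m)] · q^{−m} = ∑_{m=0}^{n} [(q^{−n};q)_m (αz;q)_m (αz^{−1};q)_m / ((q;q)_m (αβ;q)_m (αγ;q)_m)] · (βγ q^{n})^{m}. Equivalently, the continuous dual q-Hahn polynomial satisfies H_n(z;α^{−1},β^{−1},γ^{−1},q^{−1}) = ₃φ₂(q^{−n}, αz, αz^{−1}; αβ, αγ; q; βγq^{n}) as terminating sums. -/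
lemma qPoch_inv_aux (a q : ℂ) (ha : a ≠ 0) (hq : q ≠ 0) (m : ℕ) :
    qPoch a⁻¹ q⁻¹ m = qPoch a q m * ((a⁻¹) ^ m * ∏ j ∈ Finset.range m, (-(q⁻¹) ^ j)) := by
  unfold qPoch
  induction m with
  | zero => simp
  | succ m ih =>
    rw [Finset.prod_range_succ, ih, Finset.prod_range_succ, Finset.prod_range_succ]
    have h : 1 - a⁻¹ * q⁻¹ ^ m = (1 - a * q ^ m) * (a⁻¹ * (-(q⁻¹) ^ m)) := by
      rw [inv_pow]
      have hqm : q ^ m ≠ 0 := pow_ne_zero _ hq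
      field_simp
      ring
    rw [h]
    ring

/-- Base-inversion identity from the proof of Theorem 5.3 of the paper:
`H_n(z;α^{−1},β^{−1},γ^{−1},q^{−1}) = ₃φ₂(q^{−n}, αz, αz^{−1}; αβ, αγ; q; βγq^{n})`
as terminating sums. -/
theorem stmt5 (n : ℕ) (q α β γ z : ℂ)
    (hq : q ≠ 0) (hα : α ≠ 0) (hβ : β ≠ 0) (hγ : γ ≠ 0) (hz : z ≠ 0)
    (hq1 : ∀ j : ℕ, 1 ≤ j → j ≤ n → q ^ j ≠ 1)
    (hαβ : ∀ i : ℕ, i < n → α * β ≠ q ^ (-(i : ℤ)))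
    (hαγ : ∀ i : ℕ, i < n → α * γ ≠ q ^ (-(i : ℤ))) :
    ∑ m ∈ Finset.range (n + 1),
        (qPoch (q ^ n) q⁻¹ m * qPoch (α⁻¹ * z) q⁻¹ m * qPoch (α⁻¹ * z⁻¹) q⁻¹ m) /
          (qPoch q⁻¹ q⁻¹ m * qPoch ((α * β)⁻¹) q⁻¹ m * qPoch ((α * γ)⁻¹) q⁻¹ m) *
          q ^ (-(m : ℤ))
      = ∑ m ∈ Finset.range (n + 1),
          (qPoch (q ^ (-(n : ℤ))) q m * qPoch (α * z) q m * qPoch (α * z⁻¹) q m) /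
            (qPoch q q m * qPoch (α * β) q m * qPoch (α * γ) q m) *
            (β * γ * q ^ n) ^ m := by
  apply Finset.sum_congr rfl
  intro m _
  have e1 : q ^ n = (q ^ (-(n : ℤ)))⁻¹ := by simp
  have e2 : α⁻¹ * z = (α * z⁻¹)⁻¹ := by simp [mul_comm]
  have e3 : α⁻¹ * z⁻¹ = (α * z)⁻¹ := by simp [mul_comm]
  have hK : (∏ j ∈ Finset.range m, (-(q⁻¹) ^ j)) ≠ 0 :=
    Finset.prod_ne_zero_iff.mpr fun j _ => neg_ne_zero.mpr (pow_ne_zero _ (inv_ne_zero hq))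
  have h1 := qPoch_inv_aux (q ^ (-(n : ℤ))) q (zpow_ne_zero _ hq) hq m
  rw [← e1] at h1
  rw [h1, e2, e3, qPoch_inv_aux (α * z⁻¹) q (mul_ne_zero hα (inv_ne_zero hz)) hq,
    qPoch_inv_aux (α * z) q (mul_ne_zero hα hz) hq, qPoch_inv_aux q q hq hq,
    qPoch_inv_aux (α * β) q (mul_ne_zero hα hβ) hq,
    qPoch_inv_aux (α * γ) q (mul_ne_zero hα hγ) hq]
  generalize (∏ j ∈ Finset.range m, (-(q⁻¹) ^ j)) = K at hK
  generalize qPoch (q ^ (-(n : ℤ))) q m = A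
  generalize qPoch (α * z) q m = B
  generalize qPoch (α * z⁻¹) q m = C
  generalize qPoch q q m = D
  generalize qPoch (α * β) q m = E
  generalize qPoch (α * γ) q m = F
  have key : ((q ^ n) ^ m * K * (((α * z⁻¹)⁻¹) ^ m * K) * (((α * z)⁻¹) ^ m * K)) /
      ((q⁻¹) ^ m * K * (((α * β)⁻¹) ^ m * K) * (((α * γ)⁻¹) ^ m * K)) * q ^ (-(m : ℤ))
      = (β * γ * q ^ n) ^ m := by
    rw [zpow_neg, zpow_natCast]
    simp only [mul_pow, inv_pow, mul_inv, inv_inv]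
    field_simp
  rw [← key, ← mul_assoc (A * B * C / (D * E * F)), ← mul_div_mul_comm]
  congr 2 <;> ring
end

section
/- Let n ≥ 0 be an integer and let q, α, β, γ, z ∈ ℂ be nonzero. Assume q^j ≠ 1 for all integers 1 ≤ j ≤ n, and assume αβ ≠ q^{−i}, αγ ≠ q^{−i} and βγ ≠ q^{−i} for all integers 0 ≤ i ≤ n−1. Then [(βγ;q)_n / (αβ;q)_n] · ∑_{m=0}^{n} [(q^{−n};q)_m (γz;q)_m (γz^{−1};q)_m / ((q;q)_m (βγ;q)_m (αγ;q)_m)] · (αβ q^{n})^{m} = ∑_{m=0}^{n} [(q^{−n};q)_m (αz;q)_m (αz^{−1};q)_m / ((q;q)_m (αβ;q)_m (αγ;q)_m)] · (βγ q^{n})^{m}. -/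
noncomputable def vv (q : ℂ) (n m : ℕ) : ℂ := ∏ j ∈ Finset.range m, (q ^ n - q ^ j)

noncomputable def uu (q a b c : ℂ) (m : ℕ) : ℂ :=
  (b * c) ^ m / (qPoch q q m * qPoch (a * b) q m * qPoch (a * c) q m)

noncomputable def ff (q a z : ℂ) (m : ℕ) : ℂ := qPoch (a * z) q m * qPoch (a * z⁻¹) q m

noncomputable def SS (q a b c z : ℂ) (n : ℕ) : ℂ :=
  ∑ m ∈ Finset.range (n + 1), uu q a b c m * vv q n m * ff q a z m

noncomputable def PP (q a b c z : ℂ) (n : ℕ) : ℂ :=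
  qPoch (a * b) q n * qPoch (a * c) q n * SS q a b c z n

lemma qPoch_succ (a q : ℂ) (m : ℕ) : qPoch a q (m + 1) = qPoch a q m * (1 - a * q ^ m) := by
  simp [qPoch, Finset.prod_range_succ]

lemma vv_succ (q : ℂ) (n m : ℕ) : vv q n (m + 1) = vv q n m * (q ^ n - q ^ m) := by
  simp [vv, Finset.prod_range_succ]

lemma vv_succ_succ (q : ℂ) (n m : ℕ) :
    vv q (n + 1) (m + 1) = (q ^ (n + 1) - 1) * q ^ m * vv q n m := by
  induction m with
  | zero => simp [vv]
  | succ m ih => rw [vv_succ, ih, vv_succ]; ring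

lemma vv_zero_of_lt (q : ℂ) (n m : ℕ) (h : n < m) : vv q n m = 0 := by
  unfold vv
  exact Finset.prod_eq_zero (Finset.mem_range.2 h) (sub_self _)

lemma qPoch_ne (a q : ℂ) (n m : ℕ) (hm : m ≤ n) (h : ∀ i < n, 1 - a * q ^ i ≠ 0) :
    qPoch a q m ≠ 0 := by
  unfold qPoch
  refine Finset.prod_ne_zero_iff.2 fun i hi => h i ?_
  have := Finset.mem_range.1 hi
  omega

lemma vv_eq (q : ℂ) (hq : q ≠ 0) (n m : ℕ) :
    qPoch (q ^ (-(n : ℤ))) q m * (q ^ n) ^ m = vv q n m := by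
  unfold qPoch vv
  rw [← Finset.card_range m, ← Finset.prod_const, Finset.card_range, ← Finset.prod_mul_distrib]
  refine Finset.prod_congr rfl fun j _ => ?_
  rw [zpow_neg, zpow_natCast]
  field_simp

lemma uu_succ (q a b c : ℂ) (m : ℕ) (h1 : 1 - q * q ^ m ≠ 0) (h2 : 1 - a * b * q ^ m ≠ 0)
    (h3 : 1 - a * c * q ^ m ≠ 0) :
    b * c * uu q a b c m = uu q a b c (m + 1) *
      ((1 - q * q ^ m) * (1 - a * b * q ^ m) * (1 - a * c * q ^ m)) := by
  unfold uu
  simp only [qPoch_succ]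
  by_cases h : qPoch q q m * qPoch (a * b) q m * qPoch (a * c) q m = 0
  · have : qPoch q q m * (1 - q * q ^ m) * (qPoch (a * b) q m * (1 - a * b * q ^ m)) *
      (qPoch (a * c) q m * (1 - a * c * q ^ m)) = 0 := by
      linear_combination ((1 - q * q ^ m) * (1 - a * b * q ^ m) * (1 - a * c * q ^ m)) * h
    rw [h, this]; simp
  · have h4 : qPoch q q m ≠ 0 := fun e => h (by simp [e])
    have h5 : qPoch (a * b) q m ≠ 0 := fun e => h (by simp [e])
    have h6 : qPoch (a * c) q m ≠ 0 := fun e => h (by simp [e])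
    generalize qPoch q q m = A at *
    generalize qPoch (a * b) q m = B at *
    generalize qPoch (a * c) q m = C at *
    generalize hx : 1 - q * q ^ m = x at *
    generalize hy : 1 - a * b * q ^ m = y at *
    generalize hw : 1 - a * c * q ^ m = w at *
    field_simp
    ring

lemma ff_succ (q a z : ℂ) (hz : z ≠ 0) (m : ℕ) :
    ff q a z (m + 1) = ff q a z m * (1 + a ^ 2 * q ^ (2 * m) - a * q ^ m * (z + z⁻¹)) := by
  unfold ff
  simp only [qPoch_succ]
  have : z * z⁻¹ = 1 := mul_inv_cancel₀ hz
  linear_combination (qPoch (a * z) q m * qPoch (a * z⁻¹) q m * a ^ 2 * q ^ (2 * m)) * this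

noncomputable def MM (q a b c z : ℂ) (n : ℕ) : ℂ :=
  a * b * c * q ^ (2 * n) * (z + z⁻¹) + 1 + q - q ^ (n + 1) - (a * b + a * c + b * c) * q ^ n

/-- the telescoped partial sums -/
lemma tele (q a b c z : ℂ) (hq : q ≠ 0) (hz : z ≠ 0) (n N : ℕ) (hN : N ≤ n + 2)
    (h1 : ∀ i < n + 2, 1 - q * q ^ i ≠ 0) (h2 : ∀ i < n + 2, 1 - a * b * q ^ i ≠ 0)
    (h3 : ∀ i < n + 2, 1 - a * c * q ^ i ≠ 0) :
    q ^ N * ∑ m ∈ Finset.range (N + 1),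
      ((1 - a * b * q ^ (n + 1)) * (1 - a * c * q ^ (n + 1)) *
          (uu q a b c m * vv q (n + 2) m * ff q a z m)
        - MM q a b c z (n + 1) * (uu q a b c m * vv q (n + 1) m * ff q a z m)
        + q * (1 - q ^ (n + 1)) * (1 - b * c * q ^ n) *
          (uu q a b c m * vv q n m * ff q a z m))
      = b * c * q ^ (2 * n + 2) * uu q a b c N * vv q (n + 1) N * ff q a z (N + 1) := by
  induction N with
  | zero =>
    rw [ff_succ _ _ _ hz]
    simp [MM, uu, vv, ff, qPoch]
    ring
  | succ m ih =>
    have ih := ih (by omega)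
    rw [Finset.sum_range_succ, mul_add, pow_succ q m, mul_assoc (q ^ m), mul_left_comm, ih,
      ff_succ _ _ _ hz (m + 1)]
    have hu := uu_succ q a b c m (h1 m (by omega)) (h2 m (by omega)) (h3 m (by omega))
    have hv1 := vv_succ q (n + 1) m
    have hv2 := vv_succ_succ q (n + 1) m
    have hv3 : q ^ (m + 1) * (1 - q ^ (n + 1)) * vv q n (m + 1)
        = (q ^ (m + 1) - q ^ (n + 1)) * vv q (n + 1) (m + 1) := by
      have e1 := vv_succ_succ q n (m + 1)
      have e2 := vv_succ q (n + 1) (m + 1)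
      linear_combination e1 - e2
    rw [hv2, MM]
    rw [hv1] at hv3 ⊢
    generalize vv q (n + 1) m = v at *
    generalize vv q n (m + 1) = w at *
    generalize uu q a b c (m + 1) = U at *
    generalize uu q a b c m = V at *
    generalize ff q a z (m + 1) = F at *
    generalize z⁻¹ = y at *
    linear_combination (q * q ^ (2 * n + 2) * v * F) * hu +
      (q * (1 - b * c * q ^ n) * U * F) * hv3

lemma SS_ext (q a b c z : ℂ) (n k : ℕ) :
    ∑ m ∈ Finset.range (n + k + 1), uu q a b c m * vv q n m * ff q a z m = SS q a b c z n := by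
  unfold SS
  symm
  refine Finset.sum_subset (fun x hx => ?_) (fun x _ hx => ?_)
  · simp only [Finset.mem_range] at *; omega
  · rw [vv_zero_of_lt q n x (by simp only [Finset.mem_range] at hx; omega)]; simp

lemma rec_PP (q a b c z : ℂ) (hq : q ≠ 0) (hz : z ≠ 0) (n : ℕ)
    (h1 : ∀ i < n + 2, 1 - q * q ^ i ≠ 0) (h2 : ∀ i < n + 2, 1 - a * b * q ^ i ≠ 0)
    (h3 : ∀ i < n + 2, 1 - a * c * q ^ i ≠ 0) :
    PP q a b c z (n + 2) = MM q a b c z (n + 1) * PP q a b c z (n + 1)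
      - q * (1 - q ^ (n + 1)) * ((1 - a * b * q ^ n) * (1 - a * c * q ^ n) * (1 - b * c * q ^ n))
        * PP q a b c z n := by
  have t := tele q a b c z hq hz n (n + 2) le_rfl h1 h2 h3
  rw [vv_zero_of_lt q (n + 1) (n + 2) (by omega), mul_zero, zero_mul] at t
  have t := (mul_eq_zero.1 t).resolve_left (pow_ne_zero _ hq)
  rw [Finset.sum_add_distrib, Finset.sum_sub_distrib, ← Finset.mul_sum, ← Finset.mul_sum,
    ← Finset.mul_sum] at t
  have e0 : ∑ m ∈ Finset.range (n + 2 + 1), uu q a b c m * vv q (n + 2) m * ff q a z m =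
      SS q a b c z (n + 2) := SS_ext q a b c z (n + 2) 0
  have e1 : ∑ m ∈ Finset.range (n + 2 + 1), uu q a b c m * vv q (n + 1) m * ff q a z m =
      SS q a b c z (n + 1) := SS_ext q a b c z (n + 1) 1
  have e2 : ∑ m ∈ Finset.range (n + 2 + 1), uu q a b c m * vv q n m * ff q a z m =
      SS q a b c z n := SS_ext q a b c z n 2
  rw [e0, e1, e2] at t
  unfold PP
  rw [qPoch_succ (a * b) q (n + 1), qPoch_succ (a * c) q (n + 1), qPoch_succ (a * b) q n,
    qPoch_succ (a * c) q n]
  linear_combination (qPoch (a * b) q n * (1 - a * b * q ^ n) *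
    (qPoch (a * c) q n * (1 - a * c * q ^ n))) * t

lemma symm_PP (q a b c z : ℂ) (hq : q ≠ 0) (hz : z ≠ 0) (n : ℕ) :
    (∀ i < n, 1 - q * q ^ i ≠ 0) → (∀ i < n, 1 - a * b * q ^ i ≠ 0) →
    (∀ i < n, 1 - a * c * q ^ i ≠ 0) → (∀ i < n, 1 - b * c * q ^ i ≠ 0) →
    PP q a b c z n = PP q c b a z n := by
  induction n using Nat.strong_induction_on with
  | _ n ih =>
    intro h1 h2 h3 h4
    match n, ih, h1, h2, h3, h4 with
    | 0, _, _, _, _, _ => simp [PP, SS, qPoch, uu, vv, ff]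
    | 1, _, h1, h2, h3, h4 =>
      have g1 := h1 0 one_pos
      have g2 := h2 0 one_pos
      have g3 := h3 0 one_pos
      have g4 := h4 0 one_pos
      have g3' : 1 - c * a ≠ 0 := by simpa [mul_comm] using g3
      have g4' : 1 - c * b ≠ 0 := by simpa [mul_comm] using g4
      simp only [pow_zero, mul_one] at g1 g2 g3 g4
      simp [PP, SS, qPoch, uu, vv, ff, Finset.sum_range_succ]
      have hq1 : q - 1 ≠ 0 := fun h => g1 (by linear_combination -h)
      field_simp
      ring
    | n + 2, ih, h1, h2, h3, h4 =>
      have i1 := ih (n + 1) (by omega) (fun i hi => h1 i (by omega)) (fun i hi => h2 i (by omega))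
        (fun i hi => h3 i (by omega)) (fun i hi => h4 i (by omega))
      have i0 := ih n (by omega) (fun i hi => h1 i (by omega)) (fun i hi => h2 i (by omega))
        (fun i hi => h3 i (by omega)) (fun i hi => h4 i (by omega))
      rw [rec_PP q a b c z hq hz n h1 h2 h3, rec_PP q c b a z hq hz n h1
        (by simpa only [mul_comm c b] using h4) (by simpa only [mul_comm c a] using h3), i1, i0]
      unfold MM
      ring

lemma ne_aux (q x : ℂ) (hq : q ≠ 0) (i : ℕ) (h : x ≠ q ^ (-(i : ℤ))) : 1 - x * q ^ i ≠ 0 := by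
  intro e
  apply h
  rw [zpow_neg, zpow_natCast]
  exact eq_inv_of_mul_eq_one_left (by linear_combination -e)

lemma SS_eq (q a b c z : ℂ) (hq : q ≠ 0) (n : ℕ) :
    ∑ m ∈ Finset.range (n + 1),
          (qPoch (q ^ (-(n : ℤ))) q m * qPoch (a * z) q m * qPoch (a * z⁻¹) q m) /
            (qPoch q q m * qPoch (a * b) q m * qPoch (a * c) q m) *
            (b * c * q ^ n) ^ m = SS q a b c z n := by
  unfold SS
  refine Finset.sum_congr rfl fun m _ => ?_
  rw [← vv_eq q hq, uu, ff, mul_pow]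
  ring


/-- Equation (5.32) in the proof of Theorem 5.3 of the paper: a transformation identity
between two terminating `₃φ₂` series. -/
theorem stmt6 (n : ℕ) (q α β γ z : ℂ)
    (hq : q ≠ 0) (hα : α ≠ 0) (hβ : β ≠ 0) (hγ : γ ≠ 0) (hz : z ≠ 0)
    (hq1 : ∀ j : ℕ, 1 ≤ j → j ≤ n → q ^ j ≠ 1)
    (hαβ : ∀ i : ℕ, i < n → α * β ≠ q ^ (-(i : ℤ)))
    (hαγ : ∀ i : ℕ, i < n → α * γ ≠ q ^ (-(i : ℤ)))
    (hβγ : ∀ i : ℕ, i < n → β * γ ≠ q ^ (-(i : ℤ))) :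
    qPoch (β * γ) q n / qPoch (α * β) q n *
        ∑ m ∈ Finset.range (n + 1),
          (qPoch (q ^ (-(n : ℤ))) q m * qPoch (γ * z) q m * qPoch (γ * z⁻¹) q m) /
            (qPoch q q m * qPoch (β * γ) q m * qPoch (α * γ) q m) *
            (α * β * q ^ n) ^ m
      = ∑ m ∈ Finset.range (n + 1),
          (qPoch (q ^ (-(n : ℤ))) q m * qPoch (α * z) q m * qPoch (α * z⁻¹) q m) /
            (qPoch q q m * qPoch (α * β) q m * qPoch (α * γ) q m) *
            (β * γ * q ^ n) ^ m := by

  have k1 : ∀ i < n, 1 - q * q ^ i ≠ 0 := fun i hi e =>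
    hq1 (i + 1) (by omega) (by omega) (by rw [pow_succ]; linear_combination -e)
  have k2 : ∀ i < n, 1 - α * β * q ^ i ≠ 0 := fun i hi => ne_aux _ _ hq _ (hαβ i hi)
  have k3 : ∀ i < n, 1 - α * γ * q ^ i ≠ 0 := fun i hi => ne_aux _ _ hq _ (hαγ i hi)
  have k4 : ∀ i < n, 1 - β * γ * q ^ i ≠ 0 := fun i hi => ne_aux _ _ hq _ (hβγ i hi)
  have s := symm_PP q α β γ z hq hz n k1 k2 k3 k4
  have e := SS_eq q γ β α z hq n
  rw [mul_comm γ β, mul_comm γ α, mul_comm β α] at e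
  rw [SS_eq q α β γ z hq n, e]
  unfold PP at s
  rw [mul_comm γ β, mul_comm γ α] at s
  have n2 := qPoch_ne _ q n n le_rfl k2
  have n3 := qPoch_ne _ q n n le_rfl k3
  rw [div_mul_eq_mul_div, div_eq_iff n2]
  apply mul_right_cancel₀ n3
  linear_combination -s
end

section
/- Let b > 0 and θ₀, θ_t, θ_*, ν ∈ ℝ, and set Q = b + b^{−1}. For j ∈ {+1, −1} define, for real Λ > 0, X_j(Λ) = (j·i·b·Λ)^{−2b(b−2ijν)} · Γ(b(b + ij(Λ−2ν))) · Γ(b² + ijb(Λ−2ν) + 1) · Γ(2b² + ijb(Λ−2ν) + 1) · Γ(j·i·b(Λ−2ν)) / ∏_{ε=±1} [ Γ(bQ/2 − j·i·b(εθ₀ + θ_*/2 − Λ + ν)) · Γ(bQ/2 + i·j·b(θ_*/2 + εθ_t + Λ − ν)) ], where Γ is the complex Gamma function and the complex power uses the principal branch of the logarithm. Then for j = +1 and j = −1, X_j(Λ) → 1 as Λ → +∞. -/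
open Complex Filter

/-- one-step ratio -/
noncomputable def qfun (a w : ℂ) : ℂ := (1 + a * w) * exp (-a * log (1 + w))

/-- normalised Gamma ratio -/
noncomputable def ffun (a z : ℂ) : ℂ := Gamma (z + a) / (Gamma z * z ^ a)

lemma qfun_bound (a : ℂ) : ∃ C > 0, ∃ δ > 0, ∀ w : ℂ, ‖w‖ < δ → ‖qfun a w - 1‖ ≤ C * ‖w‖ ^ 2 := by
  have hd : HasDerivAt (qfun a) 0 0 := by
    have h1 : HasDerivAt (fun w : ℂ => 1 + a * w) a 0 := by
      simpa using ((hasDerivAt_id (0 : ℂ)).const_mul a).const_add 1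
    have h2 : HasDerivAt (fun w : ℂ => log (1 + w)) 1 0 := by
      simpa using ((hasDerivAt_id (0 : ℂ)).const_add 1).clog (by simp)
    have h3 := h1.mul ((h2.const_mul (-a)).cexp)
    have e : a * exp (-a * log (1 + 0)) + (1 + a * 0) * (exp (-a * log (1 + 0)) * (-a * 1)) = 0 := by
      simp
    rw [e] at h3
    exact h3
  have ha : AnalyticAt ℂ (qfun a) 0 := by
    unfold qfun
    have h2 : AnalyticAt ℂ (fun w : ℂ => log (1 + w)) 0 :=
      (analyticAt_const.add analyticAt_id).clog (by simp)
    exact (analyticAt_const.add (analyticAt_const.mul analyticAt_id)).mul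
      ((analyticAt_const.mul h2).cexp)
  have hO := ha.hasFPowerSeriesAt.isBigO_sub_partialSum_pow 2
  obtain ⟨C, hC, hCb⟩ := hO.exists_pos
  rw [Asymptotics.isBigOWith_iff, Metric.eventually_nhds_iff] at hCb
  obtain ⟨δ, hδ, h⟩ := hCb
  refine ⟨C, hC, δ, hδ, fun w hw => ?_⟩
  have := h (y := w) (by simpa using hw)
  have q0 : qfun a 0 = 1 := by simp [qfun]
  simpa [FormalMultilinearSeries.partialSum, Finset.sum_range_succ, hd.deriv, q0,
    iteratedDeriv_one] using this

lemma log_step {z : ℂ} (hz : 0 ≤ z.re) (h0 : z ≠ 0) : log (z + 1) = log (1 + z⁻¹) + log z := by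
  have hre : 0 < (1 + z⁻¹).re := by
    simp only [add_re, one_re, inv_re]
    have : 0 ≤ z.re / normSq z := div_nonneg hz (normSq_nonneg z)
    linarith
  have hne : 1 + z⁻¹ ≠ 0 := by
    intro h; rw [h] at hre; simp at hre
  rw [← log_mul hne h0]
  · congr 1; field_simp
  · have h1 := abs_lt.1 (abs_arg_lt_pi_div_two_iff.2 (Or.inl hre))
    have h2 := abs_le.1 (abs_arg_le_pi_div_two_iff.2 hz)
    constructor <;> linarith [h1.1, h1.2, h2.1, h2.2]

lemma ffun_step (a : ℂ) {z : ℂ} (hz : 0 ≤ z.re) (h0 : z ≠ 0) (hza : z + a ≠ 0) :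
    ffun a (z + 1) = ffun a z * (1 + (qfun a z⁻¹ - 1)) := by
  have hz1 : z + 1 ≠ 0 := by
    intro h; have := congrArg re h; simp at this; linarith
  unfold ffun qfun
  rw [show z + 1 + a = (z + a) + 1 by ring, Gamma_add_one _ hza, Gamma_add_one _ h0,
    cpow_def_of_ne_zero hz1, cpow_def_of_ne_zero h0, log_step hz h0]
  rw [add_mul (log (1 + z⁻¹)), exp_add, show -a * log (1 + z⁻¹) = -(log (1 + z⁻¹) * a) by ring, exp_neg]
  have e1 := exp_ne_zero (log (1 + z⁻¹) * a)
  have e2 := exp_ne_zero (log z * a)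
  have hG : Gamma z ≠ 0 := Gamma_ne_zero (fun m h => by
    have h1 := congrArg re h
    have h2 := congrArg im h
    simp at h1 h2
    have : (0:ℝ) ≤ m := Nat.cast_nonneg m
    exact h0 (Complex.ext (by simp; linarith) (by simp [h2])))
  field_simp
  ring

lemma norm_shift {z : ℂ} (hz : 0 ≤ z.re) (k : ℕ) : ‖z‖ ^ 2 + (k : ℝ) ^ 2 ≤ ‖z + k‖ ^ 2 := by
  rw [← normSq_eq_norm_sq, ← normSq_eq_norm_sq, normSq_apply, normSq_apply]
  simp
  have : (0:ℝ) ≤ k := Nat.cast_nonneg k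
  nlinarith [mul_nonneg hz this]

lemma ffun_prod (a : ℂ) {z : ℂ} (hz : 0 ≤ z.re) (h0 : z ≠ 0) (hza : ∀ k : ℕ, z + k + a ≠ 0) (n : ℕ) :
    ffun a (z + n) = ffun a z * ∏ k ∈ Finset.range n, (1 + (qfun a (z + k)⁻¹ - 1)) := by
  induction n with
  | zero => simp
  | succ n ih =>
    rw [Finset.prod_range_succ, ← mul_assoc, ← ih, Nat.cast_succ, ← add_assoc]
    have hn : (0:ℝ) ≤ n := Nat.cast_nonneg n
    refine ffun_step a (by simp; linarith) ?_ (hza n)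
    intro h
    have := norm_shift hz n
    rw [h] at this
    have h3 : 0 < ‖z‖ := norm_pos_iff.2 h0
    simp at this
    nlinarith [sq_nonneg (n : ℝ)]

lemma sum_bound {R : ℝ} (hR : 1 < R) (n : ℕ) :
    ∑ k ∈ Finset.range n, 1 / (R ^ 2 + (k : ℝ) ^ 2) ≤ 2 * (1 / (R - 1) - 1 / (R + n - 1)) := by
  induction n with
  | zero => simp
  | succ n ih =>
    rw [Finset.sum_range_succ]
    have hn : (0:ℝ) ≤ n := Nat.cast_nonneg n
    have : 1 / (R ^ 2 + (n : ℝ) ^ 2) ≤ 2 * (1 / (R + n - 1) - 1 / (R + (n + 1 : ℕ) - 1)) := by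
      have p1 : 0 < R + n - 1 := by linarith
      have p2 : 0 < R + n := by linarith
      have : 2 * (1 / (R + n - 1) - 1 / (R + (n + 1 : ℕ) - 1)) = 2 / ((R + n - 1) * (R + n)) := by
        push_cast
        rw [show R + (n + 1 : ℝ) - 1 = R + n by ring]
        field_simp
        ring
      rw [this, div_le_div_iff₀ (by positivity) (by positivity)]
      nlinarith [sq_nonneg (R - n)]
    linarith

lemma Gamma_shift {s : ℂ} (hs : ∀ m : ℕ, s ≠ -m) (n : ℕ) :
    Gamma (s + n + 1) = Gamma s * ∏ j ∈ Finset.range (n + 1), (s + j) := by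
  induction n with
  | zero =>
    have := hs 0
    simp at this
    simp [Gamma_add_one s this, mul_comm]
  | succ n ih =>
    rw [Finset.prod_range_succ, ← mul_assoc, ← ih, Nat.cast_succ, ← add_assoc, Gamma_add_one]
    · ring
    · intro h
      refine hs (n + 1) ?_
      push_cast
      linear_combination h

lemma Gamma_lim {s : ℂ} (hs : ∀ m : ℕ, s ≠ -m) :
    Tendsto (fun n : ℕ => (n : ℂ) ^ s * n.factorial / Gamma (s + n + 1)) atTop (nhds 1) := by
  have hG := Gamma_ne_zero hs
  have h := (GammaSeq_tendsto_Gamma s).div_const (Gamma s)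
  rw [div_self hG] at h
  refine h.congr (fun n => ?_)
  rw [Gamma_shift hs, GammaSeq]
  rw [div_div, mul_comm (Gamma s)]

lemma ffun_lim (a : ℂ) {z : ℂ} (hz : ∀ m : ℕ, z ≠ -m) (hza : ∀ m : ℕ, z + a ≠ -m) :
    Tendsto (fun n : ℕ => ffun a (z + n)) atTop (nhds 1) := by
  rw [← tendsto_add_atTop_iff_nat 1]
  have h1 := (Gamma_lim hz).div (Gamma_lim hza) one_ne_zero
  have hsm : Tendsto (fun n : ℕ => (1 : ℂ) + (z + 1) / n) atTop (nhds 1) := by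
    simpa using (tendsto_const_div_atTop_nhds_zero_nat (z + 1)).const_add 1
  have h2 : Tendsto (fun n : ℕ => exp (-a * log (1 + (z + 1) / n))) atTop (nhds 1) := by
    have := ((hsm.clog (by simp)).const_mul (-a)).cexp
    simpa using this
  have h3 := h1.mul h2
  rw [div_one, one_mul] at h3
  refine h3.congr' ?_
  filter_upwards [eventually_gt_atTop 0, hsm.eventually_ne one_ne_zero] with n hn hne
  have hn0 : (n : ℂ) ≠ 0 := by exact_mod_cast hn.ne'
  have e : z + (n + 1 : ℕ) = ((n : ℝ) : ℂ) * (1 + (z + 1) / n) := by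
    push_cast; field_simp; ring
  have hne' : z + (n + 1 : ℕ) ≠ 0 := by
    rw [e]; exact mul_ne_zero (by simpa using hn0) hne
  have hl : log (z + (n + 1 : ℕ)) = log n + log (1 + (z + 1) / n) := by
    rw [e, log_ofReal_mul (by exact_mod_cast hn) hne, ofReal_log (by positivity)]
    simp
  simp only [Pi.div_apply]
  unfold ffun
  rw [cpow_def_of_ne_zero hne', hl, add_mul, exp_add, ← cpow_def_of_ne_zero hn0,
    show z + a + n + 1 = z + (n + 1 : ℕ) + a by push_cast; ring,
    show z + n + 1 = z + (n + 1 : ℕ) by push_cast; ring,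
    cpow_add _ _ hn0, show -a * log (1 + (z + 1) / n) = -(log (1 + (z + 1) / n) * a) by ring,
    exp_neg]
  have f1 : (n.factorial : ℂ) ≠ 0 := by exact_mod_cast n.factorial_ne_zero
  have f2 : (n : ℂ) ^ z ≠ 0 := by simp [cpow_eq_zero_iff, hn0]
  have f3 : (n : ℂ) ^ a ≠ 0 := by simp [cpow_eq_zero_iff, hn0]
  have f4 := exp_ne_zero (log (1 + (z + 1) / n) * a)
  field_simp

lemma ffun_bound (a : ℂ) : ∃ C > 0, ∃ R > 1, ∀ z : ℂ, 0 ≤ z.re → R < ‖z‖ →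
    ‖(ffun a z)⁻¹ - 1‖ ≤ Real.exp (C / (‖z‖ - 1)) - 1 := by
  obtain ⟨C, hC, δ, hδ, hq⟩ := qfun_bound a
  refine ⟨2 * C, by positivity, 1 + ‖a‖ + δ⁻¹, by have := inv_pos.2 hδ; linarith [norm_nonneg a], ?_⟩
  intro z hz hR
  have hδ' := inv_pos.2 hδ
  have ha := norm_nonneg a
  have hshift : ∀ k : ℕ, ‖z‖ ≤ ‖z + k‖ := fun k => by
    have := norm_shift hz k
    exact le_of_sq_le_sq (by nlinarith [sq_nonneg (k:ℝ)]) (norm_nonneg _)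
  have h0 : z ≠ 0 := norm_pos_iff.1 (by linarith)
  have hza : ∀ k : ℕ, z + k + a ≠ 0 := fun k h => by
    have h1 : z + k = -a := by linear_combination h
    have := hshift k
    rw [h1, norm_neg] at this
    linarith
  have hzk : ∀ k : ℕ, z + k ≠ 0 := fun k h => by
    have := hshift k
    rw [h, norm_zero] at this
    linarith
  have hlim := ffun_lim a (z := z) (fun m h => hzk m (by rw [h]; ring))
    (fun m h => hza m (by linear_combination h))
  have hGz : Gamma z ≠ 0 := Gamma_ne_zero (fun m h => hzk m (by rw [h]; ring))
  have hGza : Gamma (z + a) ≠ 0 := Gamma_ne_zero (fun m h => hza m (by linear_combination h))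
  have hf0 : ffun a z ≠ 0 := by
    unfold ffun
    exact div_ne_zero hGza (mul_ne_zero hGz (by simp [cpow_eq_zero_iff, h0]))
  have hlim2 : Tendsto (fun n : ℕ => ‖(ffun a z)⁻¹ * ffun a (z + n) - 1‖) atTop
      (nhds ‖(ffun a z)⁻¹ - 1‖) := by
    have := ((hlim.const_mul (ffun a z)⁻¹).sub_const 1).norm
    rwa [mul_one] at this
  refine le_of_tendsto' hlim2 (fun n => ?_)
  rw [ffun_prod a hz h0 hza n, inv_mul_cancel_left₀ hf0]
  refine (Finset.norm_prod_one_add_sub_one_le _ _).trans ?_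
  gcongr
  calc ∑ k ∈ Finset.range n, ‖qfun a (z + k)⁻¹ - 1‖
      ≤ ∑ k ∈ Finset.range n, C * (1 / (‖z‖ ^ 2 + (k : ℝ) ^ 2)) := by
        refine Finset.sum_le_sum (fun k _ => ?_)
        have hk := hshift k
        refine (hq _ ?_).trans ?_
        · rw [norm_inv]
          exact inv_lt_of_inv_lt₀ hδ (by linarith)
        · rw [norm_inv, inv_pow, ← one_div]
          have : 0 < ‖z‖ := norm_pos_iff.2 h0
          have := norm_shift hz k
          gcongr
    _ ≤ C * (2 * (1 / (‖z‖ - 1) - 1 / (‖z‖ + n - 1))) := by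
        rw [← Finset.mul_sum]
        have := sum_bound (R := ‖z‖) (by linarith) n
        gcongr
    _ ≤ C * (2 * (1 / (‖z‖ - 1))) := by
        have : 0 ≤ 1 / (‖z‖ + n - 1) := by
          have : (0:ℝ) ≤ n := Nat.cast_nonneg n
          apply one_div_nonneg.2; linarith
        gcongr; linarith
    _ = 2 * C / (‖z‖ - 1) := by ring

lemma ffun_tendsto (a : ℂ) (g : ℝ → ℂ) (hre : ∀ t, 0 ≤ (g t).re)
    (hg : Tendsto (fun t => ‖g t‖) atTop atTop) :
    Tendsto (fun t => ffun a (g t)) atTop (nhds 1) := by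
  obtain ⟨C, hC, R, hR, h⟩ := ffun_bound a
  have h1 : Tendsto (fun t => (ffun a (g t))⁻¹ - 1) atTop (nhds 0) := by
    refine squeeze_zero_norm' (a := fun t => Real.exp (C / (‖g t‖ - 1)) - 1) ?_ ?_
    · filter_upwards [hg.eventually_gt_atTop R] with t ht
      exact h _ (hre t) ht
    · have h2 : Tendsto (fun t => C / (‖g t‖ - 1)) atTop (nhds 0) :=
        (tendsto_atTop_add_const_right _ (-1) hg).const_div_atTop C
      have := ((Real.continuous_exp.tendsto 0).comp h2).sub_const 1
      simpa using this
  have h2 := (h1.add_const 1).inv₀ (by simp)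
  simpa using h2

/-- The limit (3.19) in the proof of Lemma 3.1 of the paper: `X_j(Λ) → 1` as `Λ → +∞`,
for `j = ±1`, where `X_j` is the coefficient function defined in (3.17). -/
theorem stmt9 (b θ0 θt θs ν : ℝ) (hb : 0 < b) (j : ℝ) (hj : j = 1 ∨ j = -1) :
    Tendsto (fun Λ : ℝ =>
      ((j : ℂ) * I * b * Λ) ^ (-2 * (b : ℂ) * (b - 2 * I * j * ν)) *
        Complex.Gamma (b * (b + I * j * (Λ - 2 * ν))) *
        Complex.Gamma (b ^ 2 + I * j * (Λ - 2 * ν) * b + 1) *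
        Complex.Gamma (2 * b ^ 2 + I * j * (Λ - 2 * ν) * b + 1) *
        Complex.Gamma (j * I * b * (Λ - 2 * ν)) /
        ((Complex.Gamma (b * (b + b⁻¹) / 2 - j * I * b * (θ0 + θs / 2 - Λ + ν)) *
            Complex.Gamma (b * (b + b⁻¹) / 2 - j * I * b * (-θ0 + θs / 2 - Λ + ν))) *
          (Complex.Gamma (b * (b + b⁻¹) / 2 + I * j * b * (θs / 2 + θt + Λ - ν)) *
            Complex.Gamma (b * (b + b⁻¹) / 2 + I * j * b * (θs / 2 - θt + Λ - ν)))))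
      atTop (nhds 1) := by
  have hbc : (b : ℂ) ≠ 0 := by exact_mod_cast hb.ne'
  have hj1 : |j| = 1 := by rcases hj with rfl | rfl <;> simp
  have hjc : (j : ℂ) ≠ 0 := by rcases hj with rfl | rfl <;> simp
  set g : ℝ → ℂ := fun Λ => (j : ℂ) * I * b * Λ with hgdef
  have hre : ∀ t, 0 ≤ (g t).re := fun t => by simp [hgdef]
  have hnorm : Tendsto (fun t => ‖g t‖) atTop atTop := by
    have : (fun t => ‖g t‖) = fun t => b * |t| := by
      ext t; simp [hgdef, hj1, abs_of_pos hb]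
    rw [this]
    exact tendsto_abs_atTop_atTop.const_mul_atTop hb
  have key := fun a => ffun_tendsto a g hre hnorm
  obtain ⟨a1, ha1⟩ : ∃ a : ℂ, a = b ^ 2 - 2 * I * j * b * ν := ⟨_, rfl⟩
  obtain ⟨a2, ha2⟩ : ∃ a : ℂ, a = b ^ 2 + 1 - 2 * I * j * b * ν := ⟨_, rfl⟩
  obtain ⟨a3, ha3⟩ : ∃ a : ℂ, a = 2 * b ^ 2 + 1 - 2 * I * j * b * ν := ⟨_, rfl⟩
  obtain ⟨a4, ha4⟩ : ∃ a : ℂ, a = - 2 * I * j * b * ν := ⟨_, rfl⟩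
  obtain ⟨b1, hb1⟩ : ∃ a : ℂ, a = (b ^ 2 + 1) / 2 - j * I * b * (θ0 + θs / 2 + ν) := ⟨_, rfl⟩
  obtain ⟨b2, hb2⟩ : ∃ a : ℂ, a = (b ^ 2 + 1) / 2 - j * I * b * (-θ0 + θs / 2 + ν) := ⟨_, rfl⟩
  obtain ⟨b3, hb3⟩ : ∃ a : ℂ, a = (b ^ 2 + 1) / 2 + j * I * b * (θs / 2 + θt - ν) := ⟨_, rfl⟩
  obtain ⟨b4, hb4⟩ : ∃ a : ℂ, a = (b ^ 2 + 1) / 2 + j * I * b * (θs / 2 - θt - ν) := ⟨_, rfl⟩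
  have hbb : (b : ℂ) * (b + ((b⁻¹ : ℝ) : ℂ)) = b ^ 2 + 1 := by
    push_cast; field_simp
  have H := ((((key a1).mul (key a2)).mul (key a3)).mul (key a4)).div
    (((key b1).mul (key b2)).mul ((key b3).mul (key b4))) (by simp)
  simp only [mul_one, div_one] at H
  refine H.congr' ?_
  filter_upwards [eventually_gt_atTop 0] with t ht
  have hz : g t ≠ 0 := by
    have : (t : ℂ) ≠ 0 := by exact_mod_cast ht.ne'
    simp [hgdef, hbc, hjc, this]
  have hGz : Gamma (g t) ≠ 0 := Gamma_ne_zero (fun m h => by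
    have h2 := congrArg im h
    simp [hgdef] at h2
    rcases h2 with (h2 | h2) | h2
    · simp [h2] at hj1
    · exact hb.ne' h2
    · exact ht.ne' h2)
  have E : g t ^ (-2 * (b : ℂ) * (b - 2 * I * j * ν)) * g t ^ a1 * g t ^ a2 * g t ^ a3 * g t ^ a4
      = g t ^ b1 * g t ^ b2 * (g t ^ b3 * g t ^ b4) := by
    simp only [← cpow_add _ _ hz]
    congr 1
    rw [ha1, ha2, ha3, ha4, hb1, hb2, hb3, hb4]
    ring
  simp only [Pi.div_apply]
  rw [hbb, show (j : ℂ) * I * b * t = g t from rfl,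
    show (b : ℂ) * (b + I * j * (t - 2 * ν)) = g t + a1 by rw [ha1]; simp only [hgdef]; ring,
    show (b : ℂ) ^ 2 + I * j * (t - 2 * ν) * b + 1 = g t + a2 by rw [ha2]; simp only [hgdef]; ring,
    show 2 * (b : ℂ) ^ 2 + I * j * (t - 2 * ν) * b + 1 = g t + a3 by
      rw [ha3]; simp only [hgdef]; ring,
    show j * I * (b : ℂ) * (t - 2 * ν) = g t + a4 by rw [ha4]; simp only [hgdef]; ring,
    show ((b : ℂ) ^ 2 + 1) / 2 - j * I * b * (θ0 + θs / 2 - t + ν) = g t + b1 by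
      rw [hb1]; simp only [hgdef]; ring,
    show ((b : ℂ) ^ 2 + 1) / 2 - j * I * b * (-θ0 + θs / 2 - t + ν) = g t + b2 by
      rw [hb2]; simp only [hgdef]; ring,
    show ((b : ℂ) ^ 2 + 1) / 2 + I * j * b * (θs / 2 + θt + t - ν) = g t + b3 by
      rw [hb3]; simp only [hgdef]; ring,
    show ((b : ℂ) ^ 2 + 1) / 2 + I * j * b * (θs / 2 - θt + t - ν) = g t + b4 by
      rw [hb4]; simp only [hgdef]; ring]
  have P : ∀ c : ℂ, g t ^ c ≠ 0 := fun c => by simp [cpow_eq_zero_iff, hz]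
  have hG : ∀ c, Gamma (g t + c) = ffun c (g t) * (Gamma (g t) * g t ^ c) := fun c => by
    unfold ffun
    rw [div_mul_cancel₀ _ (mul_ne_zero hGz (P c))]
  rw [hG a1, hG a2, hG a3, hG a4, hG b1, hG b2, hG b3, hG b4]
  generalize ffun a1 (g t) = A1
  generalize ffun a2 (g t) = A2
  generalize ffun a3 (g t) = A3
  generalize ffun a4 (g t) = A4
  generalize ffun b1 (g t) = B1
  generalize ffun b2 (g t) = B2
  generalize ffun b3 (g t) = B3
  generalize ffun b4 (g t) = B4
  have hD : Gamma (g t) ^ 4 * (g t ^ b1 * g t ^ b2 * (g t ^ b3 * g t ^ b4)) ≠ 0 :=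
    mul_ne_zero (pow_ne_zero _ hGz) (mul_ne_zero (mul_ne_zero (P _) (P _)) (mul_ne_zero (P _) (P _)))
  rw [← mul_div_mul_right _ _ hD]
  congr 1
  · rw [← E]; ring
  · ring
end

section
/- Let b > 0 and θ₀, θ_t, θ_*, ν ∈ ℝ. For real Λ > 0 define F(Λ) = −2 cosh(2πb(θ₀ + θ_t + ib/2)) + 4 ∑_{κ=±1} [ ∏_{ε=±1} cosh(πb(ε(Λ−θ_*)/2 − ib/2 − θ₀ − κ(Λ/2 − ν))) · cosh(πb(ε(Λ+θ_*)/2 − ib/2 − θ_t − κ(Λ/2 − ν))) ] / [ sinh(2πb(κ(Λ/2 − ν) + ib/2)) · sinh(2πbκ(Λ/2 − ν)) ]. Then, as Λ → +∞, F(Λ) converges to 4 e^{πb(θ₀+θ_t+2ν)} cosh(πb(ib/2 + θ₀ + θ_*/2 − ν)) cosh(πb(ib/2 − θ_*/2 + θ_t − ν)) + 4 e^{−πb(θ₀+θ_t−2ν)} cosh(πb(ib/2 + θ_t + θ_*/2 + ν)) cosh(πb(ib/2 − θ_*/2 + θ₀ + ν)) − 2 cosh(2πb(ib/2 + θ₀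 + θ_t)). -/
open Complex Filter

theorem aux_ratio (k : ℝ) (hk : 0 < k) (a d : ℂ) :
    Tendsto (fun x : ℝ => Complex.cosh (k * x + a) / Complex.sinh (k * x + d)) atTop
      (nhds (Complex.exp (a - d))) := by
  have hq : Tendsto (fun x : ℝ => Complex.exp (-2 * k * x)) atTop (nhds 0) := by
    have h1 : Tendsto (fun x : ℝ => Real.exp (-(2 * k * x))) atTop (nhds 0) :=
      Real.tendsto_exp_neg_atTop_nhds_zero.comp
        (tendsto_id.const_mul_atTop (by positivity : 0 < 2 * k))
    have h2 := (Complex.continuous_ofReal.tendsto 0).comp h1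
    rw [Complex.ofReal_zero] at h2
    refine h2.congr fun x => ?_
    simp only [Function.comp]
    push_cast
    congr 1
    ring
  have h3 : Tendsto (fun x : ℝ => (Complex.exp a + Complex.exp (-a) * Complex.exp (-2 * k * x)) /
      (Complex.exp d - Complex.exp (-d) * Complex.exp (-2 * k * x))) atTop
      (nhds ((Complex.exp a + Complex.exp (-a) * 0) / (Complex.exp d - Complex.exp (-d) * 0))) := by
    refine Tendsto.div ((hq.const_mul _).const_add _) ((hq.const_mul _).const_sub _) ?_
    simp [Complex.exp_ne_zero]
  have e : (Complex.exp a + Complex.exp (-a) * 0) / (Complex.exp d - Complex.exp (-d) * 0)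
      = Complex.exp (a - d) := by
    simp [Complex.exp_sub]
  rw [e] at h3
  refine h3.congr fun x => ?_
  have hc : Complex.cosh (k * x + a) = (Complex.exp (k * x) / 2) *
      (Complex.exp a + Complex.exp (-a) * Complex.exp (-2 * k * x)) := by
    rw [Complex.cosh, mul_add, div_mul_eq_mul_div, div_mul_eq_mul_div, ← Complex.exp_add,
      ← Complex.exp_add, ← Complex.exp_add, ← add_div]
    ring_nf
  have hs : Complex.sinh (k * x + d) = (Complex.exp (k * x) / 2) *
      (Complex.exp d - Complex.exp (-d) * Complex.exp (-2 * k * x)) := by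
    rw [Complex.sinh, mul_sub, div_mul_eq_mul_div, div_mul_eq_mul_div, ← Complex.exp_add,
      ← Complex.exp_add, ← Complex.exp_add, ← sub_div]
    ring_nf
  rw [hc, hs, mul_div_mul_left _ _ (div_ne_zero (Complex.exp_ne_zero _) two_ne_zero)]

/-- Equation (3.29) in the proof of Lemma 3.1 of the paper: the potential `H_F⁰` of the
Virasoro fusion-kernel difference operator, evaluated at the confluent parameter
substitution, converges as `Λ → +∞` to the potential `H⁰` of the confluent
fusion-kernel difference operator (even index). -/
theorem stmt11 (b θ0 θt θs ν : ℝ) (hb : 0 < b) :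
    Tendsto (fun Λ : ℝ =>
      -2 * Complex.cosh (2 * Real.pi * b * (θ0 + θt + I * b / 2)) +
        4 * ((Complex.cosh (Real.pi * b * ((Λ - θs) / 2 - I * b / 2 - θ0 - (Λ / 2 - ν))) *
                Complex.cosh (Real.pi * b * (-((Λ - θs) / 2) - I * b / 2 - θ0 - (Λ / 2 - ν))) *
                (Complex.cosh (Real.pi * b * ((Λ + θs) / 2 - I * b / 2 - θt - (Λ / 2 - ν))) *
                  Complex.cosh
                    (Real.pi * b * (-((Λ + θs) / 2) - I * b / 2 - θt - (Λ / 2 - ν))))) /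
              (Complex.sinh (2 * Real.pi * b * ((Λ / 2 - ν) + I * b / 2)) *
                Complex.sinh (2 * Real.pi * b * (Λ / 2 - ν))) +
            (Complex.cosh (Real.pi * b * ((Λ - θs) / 2 - I * b / 2 - θ0 + (Λ / 2 - ν))) *
                Complex.cosh (Real.pi * b * (-((Λ - θs) / 2) - I * b / 2 - θ0 + (Λ / 2 - ν))) *
                (Complex.cosh (Real.pi * b * ((Λ + θs) / 2 - I * b / 2 - θt + (Λ / 2 - ν))) *
                  Complex.cosh
                    (Real.pi * b * (-((Λ + θs) / 2) - I * b / 2 - θt + (Λ / 2 - ν))))) /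
              (Complex.sinh (2 * Real.pi * b * (-(Λ / 2 - ν) + I * b / 2)) *
                Complex.sinh (2 * Real.pi * b * (-(Λ / 2 - ν)))))) atTop
      (nhds
        (4 * Complex.exp (Real.pi * b * (θ0 + θt + 2 * ν)) *
            Complex.cosh (Real.pi * b * (I * b / 2 + θ0 + θs / 2 - ν)) *
            Complex.cosh (Real.pi * b * (I * b / 2 - θs / 2 + θt - ν)) +
          4 * Complex.exp (-(Real.pi * b * (θ0 + θt - 2 * ν))) *
            Complex.cosh (Real.pi * b * (I * b / 2 + θt + θs / 2 + ν)) *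
            Complex.cosh (Real.pi * b * (I * b / 2 - θs / 2 + θ0 + ν)) -
          2 * Complex.cosh (2 * Real.pi * b * (I * b / 2 + θ0 + θt)))) := by
  have hk : 0 < Real.pi * b := mul_pos Real.pi_pos hb
  have r1 := aux_ratio _ hk (Real.pi * b * (-θs / 2 + I * b / 2 + θ0 - ν))
    (Real.pi * b * (-2 * ν + I * b))
  have r2 := aux_ratio _ hk (Real.pi * b * (θs / 2 + I * b / 2 + θt - ν))
    (Real.pi * b * (-2 * ν))
  have r3 := aux_ratio _ hk (Real.pi * b * (-θs / 2 - I * b / 2 - θ0 - ν))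
    (Real.pi * b * (-2 * ν - I * b))
  have r4 := aux_ratio _ hk (Real.pi * b * (θs / 2 - I * b / 2 - θt - ν))
    (Real.pi * b * (-2 * ν))
  have p1 := (r1.mul r2).mul_const
    (Complex.cosh (Real.pi * b * (I * b / 2 + θ0 + θs / 2 - ν)) *
      Complex.cosh (Real.pi * b * (I * b / 2 - θs / 2 + θt - ν)))
  have p2 := (r3.mul r4).mul_const
    (Complex.cosh (Real.pi * b * (I * b / 2 + θt + θs / 2 + ν)) *
      Complex.cosh (Real.pi * b * (I * b / 2 - θs / 2 + θ0 + ν)))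
  have p := ((p1.add p2).const_mul 4).const_add
    (-2 * Complex.cosh (2 * Real.pi * b * (θ0 + θt + I * b / 2)))
  rw [← Complex.exp_add, ← Complex.exp_add] at p
  convert p using 1
  · funext x
    push_cast
    have c1 : Complex.cosh (Real.pi * b * ((x - θs) / 2 - I * b / 2 - θ0 - (x / 2 - ν))) =
        Complex.cosh (Real.pi * b * (I * b / 2 + θ0 + θs / 2 - ν)) := by
      rw [← Complex.cosh_neg]; congr 1; ring
    have c2 : Complex.cosh (Real.pi * b * (-((x - θs) / 2) - I * b / 2 - θ0 - (x / 2 - ν))) =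
        Complex.cosh (Real.pi * b * x + Real.pi * b * (-θs / 2 + I * b / 2 + θ0 - ν)) := by
      rw [← Complex.cosh_neg]; congr 1; ring
    have c3 : Complex.cosh (Real.pi * b * ((x + θs) / 2 - I * b / 2 - θt - (x / 2 - ν))) =
        Complex.cosh (Real.pi * b * (I * b / 2 - θs / 2 + θt - ν)) := by
      rw [← Complex.cosh_neg]; congr 1; ring
    have c4 : Complex.cosh (Real.pi * b * (-((x + θs) / 2) - I * b / 2 - θt - (x / 2 - ν))) =
        Complex.cosh (Real.pi * b * x + Real.pi * b * (θs / 2 + I * b / 2 + θt - ν)) := by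
      rw [← Complex.cosh_neg]; congr 1; ring
    have c5 : Complex.cosh (Real.pi * b * ((x - θs) / 2 - I * b / 2 - θ0 + (x / 2 - ν))) =
        Complex.cosh (Real.pi * b * x + Real.pi * b * (-θs / 2 - I * b / 2 - θ0 - ν)) := by
      congr 1; ring
    have c6 : Complex.cosh (Real.pi * b * (-((x - θs) / 2) - I * b / 2 - θ0 + (x / 2 - ν))) =
        Complex.cosh (Real.pi * b * (I * b / 2 - θs / 2 + θ0 + ν)) := by
      rw [← Complex.cosh_neg]; congr 1; ring
    have c7 : Complex.cosh (Real.pi * b * ((x + θs) / 2 - I * b / 2 - θt + (x / 2 - ν))) =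
        Complex.cosh (Real.pi * b * x + Real.pi * b * (θs / 2 - I * b / 2 - θt - ν)) := by
      congr 1; ring
    have c8 : Complex.cosh (Real.pi * b * (-((x + θs) / 2) - I * b / 2 - θt + (x / 2 - ν))) =
        Complex.cosh (Real.pi * b * (I * b / 2 + θt + θs / 2 + ν)) := by
      rw [← Complex.cosh_neg]; congr 1; ring
    have s1 : Complex.sinh (2 * Real.pi * b * ((x / 2 - ν) + I * b / 2)) =
        Complex.sinh (Real.pi * b * x + Real.pi * b * (-2 * ν + I * b)) := by
      congr 1; ring
    have s2 : Complex.sinh (2 * Real.pi * b * (x / 2 - ν)) =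
        Complex.sinh (Real.pi * b * x + Real.pi * b * (-2 * ν)) := by
      congr 1; ring
    have s3 : Complex.sinh (2 * Real.pi * b * (-(x / 2 - ν) + I * b / 2)) =
        -Complex.sinh (Real.pi * b * x + Real.pi * b * (-2 * ν - I * b)) := by
      rw [← Complex.sinh_neg]; congr 1; ring
    have s4 : Complex.sinh (2 * Real.pi * b * (-(x / 2 - ν))) =
        -Complex.sinh (Real.pi * b * x + Real.pi * b * (-2 * ν)) := by
      rw [← Complex.sinh_neg]; congr 1; ring
    rw [c1, c2, c3, c4, c5, c6, c7, c8, s1, s2, s3, s4, neg_mul_neg, div_mul_div_comm,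
      div_mul_div_comm]
    ring
  · congr 1
    have e1 : (Real.pi * b * (-θs / 2 + I * b / 2 + θ0 - ν) - Real.pi * b * (-2 * ν + I * b) +
        (Real.pi * b * (θs / 2 + I * b / 2 + θt - ν) - Real.pi * b * (-2 * ν)) : ℂ) =
        Real.pi * b * (θ0 + θt + 2 * ν) := by ring
    have e2 : (Real.pi * b * (-θs / 2 - I * b / 2 - θ0 - ν) - Real.pi * b * (-2 * ν - I * b) +
        (Real.pi * b * (θs / 2 - I * b / 2 - θt - ν) - Real.pi * b * (-2 * ν)) : ℂ) =
        -(Real.pi * b * (θ0 + θt - 2 * ν)) := by ring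
    have e3 : (I * b / 2 + θ0 + θt : ℂ) = θ0 + θt + I * b / 2 := by ring
    rw [e1, e2, e3]
    ring
end

section
/- Let b > 0 and σ ∈ ℝ. For real Λ > 0 define χ(Λ) = 2π e^{πb(σ + ib/2)} (ibΛ)^{−b(b − 2iσ)} / [ Γ((1−b²)/2 − ib(Λ − σ)) · Γ((1−b²)/2 + ib(Λ + σ)) ], where Γ is the complex Gamma function and the complex power uses the principal branch of the logarithm. Then e^{−πbΛ} χ(Λ) → 1 as Λ → +∞. -/
open Complex Filter

/-- Second-order bound near zero. -/
lemma aux_bound (α β : ℂ) : ∃ C r : ℝ, 0 < C ∧ 0 < r ∧ ∀ u : ℂ, ‖u‖ < r →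
    ‖(1 + α * u) / (1 + β * u) * exp ((β - α) * log (1 + u)) - 1‖ ≤ C * ‖u‖ ^ 2 := by
  set F : ℂ → ℂ := fun u => (1 + α * u) / (1 + β * u) * exp ((β - α) * log (1 + u)) with hF
  have h1 : AnalyticAt ℂ F 0 := by
    refine AnalyticAt.mul (AnalyticAt.div (by fun_prop) (by fun_prop) (by simp)) ?_
    refine AnalyticAt.cexp' (AnalyticAt.mul (by fun_prop) (AnalyticAt.clog (by fun_prop) ?_))
    simp
  have hd : HasDerivAt F 0 0 := by
    have ha : HasDerivAt (fun u : ℂ => 1 + α * u) α 0 := by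
      simpa using ((hasDerivAt_id (0 : ℂ)).const_mul α).const_add 1
    have hb : HasDerivAt (fun u : ℂ => 1 + β * u) β 0 := by
      simpa using ((hasDerivAt_id (0 : ℂ)).const_mul β).const_add 1
    have hl : HasDerivAt (fun u : ℂ => log (1 + u)) 1 0 := by
      have := ((hasDerivAt_id (0 : ℂ)).const_add 1).clog (by simp)
      simpa using this
    have := (ha.div hb (by simp)).mul ((hl.const_mul (β - α)).cexp)
    exact this.congr_deriv (by simp)
  have h2 := (h1.hasFPowerSeriesAt).isBigO_sub_partialSum_pow 2
  have h3 : (fun u => F u - 1) =O[nhds 0] fun u => ‖u‖ ^ 2 := by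
    refine h2.congr_left ?_
    intro u
    have h0 : F 0 = 1 := by simp [hF]
    simp [FormalMultilinearSeries.partialSum, Finset.sum_range_succ,
      FormalMultilinearSeries.ofScalars, hd.deriv, h0]
  obtain ⟨C, hC, h4⟩ := h3.exists_pos
  obtain ⟨r, hr, h5⟩ := Metric.eventually_nhds_iff.1 h4.bound
  refine ⟨C, r, hC, hr, fun u hu => ?_⟩
  have := h5 (y := u) (by simpa using hu)
  simpa using this

lemma aux_log (w : ℂ) (hw : w ≠ 0) (hre : 0 ≤ w.re) : log (w + 1) - log w = log (1 + w⁻¹) := by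
  have h0 : 0 < (1 + w⁻¹).re := by
    rw [add_re, one_re, inv_re]
    have : 0 ≤ w.re / normSq w := div_nonneg hre (normSq_nonneg _)
    linarith
  have h1 : (1 + w⁻¹) ≠ 0 := by
    intro h; rw [h] at h0; simp at h0
  have h2 : w + 1 = w * (1 + w⁻¹) := by field_simp
  have h3 := abs_le.1 (abs_arg_le_pi_div_two_iff.2 hre)
  have h4 := abs_lt.1 (abs_arg_lt_pi_div_two_iff.2 (Or.inl h0))
  rw [h2, log_mul hw h1 ⟨by linarith [h3.1, h4.1], by linarith [h3.2, h4.2]⟩]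
  ring

lemma aux_sum (y : ℝ) (hy : 1 < y) (n : ℕ) :
    ∑ k ∈ Finset.range n, 1 / (y ^ 2 + (k : ℝ) ^ 2) ≤ 2 / (y - 1) := by
  have h : ∑ k ∈ Finset.range n, 1 / (y ^ 2 + (k : ℝ) ^ 2) ≤ 2 / (y - 1) - 2 / (y - 1 + n) := by
    induction n with
    | zero => simp
    | succ n ih =>
      rw [Finset.sum_range_succ]
      have hn : (0 : ℝ) ≤ n := n.cast_nonneg
      have e : 2 / (y - 1 + n) - 2 / (y - 1 + (n + 1 : ℕ)) = 2 / ((y - 1 + n) * (y + n)) := by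
        push_cast
        have : y - 1 + n ≠ 0 := by linarith
        have : y + n ≠ 0 := by linarith
        have : y - 1 + (n + 1) ≠ 0 := by linarith
        field_simp
        ring
      have : 1 / (y ^ 2 + (n : ℝ) ^ 2) ≤ 2 / ((y - 1 + n) * (y + n)) := by
        have : 0 < y - 1 + n := by linarith
        rw [div_le_div_iff₀ (by positivity) (by positivity)]
        nlinarith [sq_nonneg (y - n)]
      linarith
  have : 0 ≤ 2 / (y - 1 + n) := by
    have hn : (0 : ℝ) ≤ n := n.cast_nonneg
    exact div_nonneg (by norm_num) (by linarith)
  linarith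

lemma aux_logdiff (z : ℂ) : Tendsto (fun n : ℕ => log (z + ((n + 1 : ℕ) : ℂ)) - log (n : ℂ))
    atTop (nhds 0) := by
  have h1 : Tendsto (fun n : ℕ => 1 + (z + 1) * ((n : ℂ))⁻¹) atTop (nhds 1) := by
    have : Tendsto (fun n : ℕ => ((n : ℂ))⁻¹) atTop (nhds 0) := tendsto_inv_atTop_nhds_zero_nat
    simpa using (this.const_mul (z + 1)).const_add 1
  have h2 := h1.clog (by simp)
  rw [log_one] at h2
  refine h2.congr' ?_
  filter_upwards [eventually_gt_atTop 0, h1.eventually_ne one_ne_zero] with n hn hne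
  have e : z + ((n + 1 : ℕ) : ℂ) = ((n : ℝ) : ℂ) * (1 + (z + 1) * (n : ℂ)⁻¹) := by
    have : (n : ℂ) ≠ 0 := by exact_mod_cast hn.ne'
    push_cast
    field_simp
    ring
  rw [e, log_ofReal_mul (by exact_mod_cast hn) hne]
  simp [ofReal_log]

lemma aux_prod (z α β : ℂ) (ha : ∀ k : ℕ, z + α + k ≠ 0)
    (hb : ∀ k : ℕ, z + β + k ≠ 0) :
    Tendsto (fun n : ℕ => ∏ k ∈ Finset.range (n + 1), ((z + α + k) / (z + β + k) *
      exp ((β - α) * (log (z + k + 1) - log (z + k))))) atTop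
      (nhds (Gamma (z + β) / Gamma (z + α) * exp ((α - β) * log z))) := by
  have hG : Gamma (z + α) ≠ 0 := Gamma_ne_zero (fun m h => ha m (by rw [h]; ring))
  have hG' : Gamma (z + β) ≠ 0 := Gamma_ne_zero (fun m h => hb m (by rw [h]; ring))
  have t1 := (GammaSeq_tendsto_Gamma (z + β)).div (GammaSeq_tendsto_Gamma (z + α)) hG
  have t2 := (((aux_logdiff z).const_mul (β - α)).cexp).mul_const (exp ((α - β) * log z))
  have t3 := t1.mul t2
  simp only [mul_zero, exp_zero, one_mul] at t3
  refine t3.congr' ?_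
  filter_upwards [eventually_gt_atTop 0] with n hn
  have hn0 : (n : ℂ) ≠ 0 := by exact_mod_cast hn.ne'
  rw [Finset.prod_mul_distrib, Finset.prod_div_distrib, ← exp_sum, ← Finset.mul_sum]
  have hs : ∑ k ∈ Finset.range (n + 1), (log (z + k + 1) - log (z + k)) =
      log (z + ((n + 1 : ℕ) : ℂ)) - log z := by
    have := Finset.sum_range_sub (fun k : ℕ => log (z + (k : ℂ))) (n + 1)
    simp only [Nat.cast_zero, add_zero] at this
    rw [← this]
    refine Finset.sum_congr rfl fun k _ => ?_
    push_cast
    rw [add_assoc]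
  rw [hs]
  have hpa : ∏ k ∈ Finset.range (n + 1), (z + α + k) ≠ 0 := Finset.prod_ne_zero_iff.2 fun k _ => ha k
  have hpb : ∏ k ∈ Finset.range (n + 1), (z + β + k) ≠ 0 := Finset.prod_ne_zero_iff.2 fun k _ => hb k
  have hf : (n.factorial : ℂ) ≠ 0 := by exact_mod_cast n.factorial_ne_zero
  simp only [Pi.div_apply, GammaSeq]
  rw [cpow_def_of_ne_zero hn0, cpow_def_of_ne_zero hn0]
  set L := log (n : ℂ)
  set M := log (z + ((n + 1 : ℕ) : ℂ))
  have e1 : exp ((β - α) * (M - log z)) = exp (L * (z + β)) / exp (L * (z + α)) *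
      (exp ((β - α) * (M - L)) * exp ((α - β) * log z)) := by
    rw [← exp_sub, ← exp_add, ← exp_add]
    congr 1; ring
  rw [e1]
  have := exp_ne_zero (L * (z + α))
  field_simp

lemma aux_ratio_s12 (α β : ℂ) : Tendsto (fun y : ℝ =>
    Gamma (I * y + β) / Gamma (I * y + α) * exp ((α - β) * log (I * y))) atTop (nhds 1) := by
  obtain ⟨C, r, hC, hr, hbd⟩ := aux_bound α β
  have hlim : Tendsto (fun y : ℝ => Real.exp (C * (2 / (y - 1))) - 1) atTop (nhds 0) := by
    have h : Tendsto (fun y : ℝ => 2 / (y - 1)) atTop (nhds 0) :=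
      tendsto_const_nhds.div_atTop (tendsto_atTop_add_const_right _ (-1) tendsto_id)
    have := ((h.const_mul C).rexp).sub_const 1
    simpa using this
  rw [tendsto_iff_norm_sub_tendsto_zero]
  refine squeeze_zero' (Eventually.of_forall fun _ => norm_nonneg _) ?_ hlim
  filter_upwards [eventually_gt_atTop 1, eventually_gt_atTop |α.im|, eventually_gt_atTop |β.im|,
    eventually_gt_atTop r⁻¹] with y hy1 hya hyb hyr
  have hya' := abs_lt.1 hya
  have hyb' := abs_lt.1 hyb
  have ha : ∀ k : ℕ, I * (y : ℂ) + α + k ≠ 0 := by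
    intro k h
    have := congrArg Complex.im h
    simp at this
    linarith [hya'.1]
  have hb : ∀ k : ℕ, I * (y : ℂ) + β + k ≠ 0 := by
    intro k h
    have := congrArg Complex.im h
    simp at this
    linarith [hyb'.1]
  have ht := aux_prod (I * (y : ℂ)) α β ha hb
  refine le_of_tendsto ((ht.sub_const 1).norm) (Eventually.of_forall fun n => ?_)
  have hkey : ∀ k : ℕ, ‖(I * (y : ℂ) + α + k) / (I * (y : ℂ) + β + k) *
      exp ((β - α) * (log (I * (y : ℂ) + k + 1) - log (I * (y : ℂ) + k))) - 1‖ ≤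
      C * (1 / (y ^ 2 + (k : ℝ) ^ 2)) := by
    intro k
    set w : ℂ := I * (y : ℂ) + k with hw
    have hre : w.re = k := by simp [hw]
    have him : w.im = y := by simp [hw]
    have hw0 : w ≠ 0 := by
      intro h; rw [h] at him; simp at him; linarith
    have hnorm : ‖w‖ ^ 2 = y ^ 2 + (k : ℝ) ^ 2 := by
      rw [← normSq_eq_norm_sq, normSq_apply, hre, him]; ring
    have hyw : y ≤ ‖w‖ := by
      have := Complex.abs_im_le_norm w
      rw [him] at this
      exact (le_abs_self y).trans this
    rw [aux_log w hw0 (by rw [hre]; exact k.cast_nonneg)]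
    have hu : ‖w⁻¹‖ < r := by
      rw [norm_inv]
      exact inv_lt_of_inv_lt₀ hr (hyr.trans_le hyw)
    have e : (I * (y : ℂ) + α + k) / (I * (y : ℂ) + β + k) = (1 + α * w⁻¹) / (1 + β * w⁻¹) := by
      have e1 : I * (y : ℂ) + α + k = w * (1 + α * w⁻¹) := by field_simp; rw [hw]; ring
      have e2 : I * (y : ℂ) + β + k = w * (1 + β * w⁻¹) := by field_simp; rw [hw]; ring
      rw [e1, e2, mul_div_mul_left _ _ hw0]
    rw [e]
    refine (hbd _ hu).trans_eq ?_
    rw [norm_inv, inv_pow, hnorm, one_div]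
  have hp := Finset.norm_prod_one_add_sub_one_le (Finset.range (n + 1)) (fun k : ℕ =>
    (I * (y : ℂ) + α + k) / (I * (y : ℂ) + β + k) *
      exp ((β - α) * (log (I * (y : ℂ) + k + 1) - log (I * (y : ℂ) + k))) - 1)
  simp only [add_sub_cancel] at hp
  refine hp.trans ?_
  gcongr
  refine (Finset.sum_le_sum fun k _ => hkey k).trans ?_
  rw [← Finset.mul_sum]
  exact mul_le_mul_of_nonneg_left (aux_sum y hy1 _) hC.le

lemma aux_sin (E a : ℂ) (hE : E + I * (Real.pi * a) = I * (Real.pi / 2)) :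
    Tendsto (fun y : ℝ => exp (-(Real.pi * y)) * (2 * exp E * sin (Real.pi * (a - I * y))))
      atTop (nhds 1) := by
  have h0 : Tendsto (fun y : ℝ => ((Real.exp (-(2 * Real.pi * y)) : ℝ) : ℂ)) atTop (nhds 0) := by
    have : Tendsto (fun y : ℝ => Real.exp (-(2 * Real.pi * y))) atTop (nhds 0) :=
      Real.tendsto_exp_neg_atTop_nhds_zero.comp
        (tendsto_id.const_mul_atTop (by positivity))
    exact_mod_cast (continuous_ofReal.tendsto 0).comp this
  have h1 := ((h0.const_mul (I * exp E * exp (-(I * (Real.pi * a))))).const_add 1)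
  simp only [mul_zero, add_zero] at h1
  refine h1.congr fun y => ?_
  have e1 : exp E * exp (I * (Real.pi * a)) = I := by
    rw [← exp_add, hE, mul_comm, exp_pi_div_two_mul_I]
  have e2 : exp (-(Real.pi * (a - I * y)) * I) =
      exp (-(I * (Real.pi * a))) * exp (-(Real.pi * y)) := by
    rw [← exp_add]; congr 1; linear_combination (Real.pi * y) * I_sq
  have e3 : exp ((Real.pi * (a - I * y)) * I) =
      exp (I * (Real.pi * a)) * exp (Real.pi * y) := by
    rw [← exp_add]; congr 1; linear_combination -(Real.pi * y) * I_sq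
  have e4 : ((Real.exp (-(2 * Real.pi * y)) : ℝ) : ℂ) =
      exp (-(Real.pi * y)) * exp (-(Real.pi * y)) := by
    rw [← exp_add]; push_cast; congr 1; ring
  have e5 : exp (-(Real.pi * y : ℂ)) * exp (Real.pi * y) = 1 := by
    rw [← exp_add]; simp
  rw [sin, e2, e3, e4]
  linear_combination (I * exp (-(Real.pi * y : ℂ)) * exp (Real.pi * y)) * e1 + I ^ 2 * e5 + I_sq

/-- The limit of the coefficient function `χ` defined in (3.41), established in the proof of
Lemma 3.3 of the paper: `e^{−πbΛ} χ(Λ) → 1` as `Λ → +∞`. -/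
theorem stmt12 (b σ : ℝ) (hb : 0 < b) :
    Tendsto (fun Λ : ℝ =>
      Complex.exp (-(Real.pi * b * Λ)) *
        (2 * Real.pi * Complex.exp (Real.pi * b * (σ + I * b / 2)) *
          (I * b * Λ) ^ (-((b : ℂ) * (b - 2 * I * σ))) /
          (Complex.Gamma ((1 - b ^ 2) / 2 - I * b * (Λ - σ)) *
            Complex.Gamma ((1 - b ^ 2) / 2 + I * b * (Λ + σ))))) atTop (nhds 1) := by
  set a : ℂ := (1 - (b : ℂ) ^ 2) / 2 + I * b * σ with ha
  set E : ℂ := Real.pi * b * (σ + I * b / 2) with hE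
  have hy : Tendsto (fun Λ : ℝ => b * Λ) atTop atTop := tendsto_id.const_mul_atTop hb
  have hEa : E + I * (Real.pi * a) = I * (Real.pi / 2) := by
    rw [hE, ha]
    linear_combination (Real.pi * b * σ : ℂ) * I_sq
  have t := ((aux_sin E a hEa).mul (aux_ratio_s12 a (1 - a))).comp hy
  rw [mul_one] at t
  refine t.congr' ?_
  filter_upwards [hy.eventually_gt_atTop |a.im|, hy.eventually_gt_atTop 0] with Λ h1 h2
  simp only [Function.comp]
  set y : ℝ := b * Λ with hyd
  have hyc : (y : ℂ) = b * Λ := by rw [hyd]; push_cast; rfl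
  have h1' := abs_lt.1 h1
  have g1 : (1 - (b : ℂ) ^ 2) / 2 - I * b * (Λ - σ) = a - I * y := by rw [ha, hyc]; ring
  have g2 : (1 - (b : ℂ) ^ 2) / 2 + I * b * (Λ + σ) = I * y + a := by rw [ha, hyc]; ring
  have g3 : I * (b : ℂ) * Λ = I * y := by rw [hyc]; ring
  have g4 : -((b : ℂ) * (b - 2 * I * σ)) = a - (1 - a) := by rw [ha]; ring
  have g5 : (Real.pi : ℂ) * b * Λ = Real.pi * y := by rw [hyc]; ring
  have hy0 : I * (y : ℂ) ≠ 0 := mul_ne_zero I_ne_zero (by exact_mod_cast h2.ne')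
  rw [g1, g2, g3, g4, g5, cpow_def_of_ne_zero hy0, mul_comm (log (I * (y : ℂ)))]
  have n1 : Gamma (a - I * y) ≠ 0 := by
    refine Gamma_ne_zero fun m h => ?_
    have := congrArg Complex.im h
    simp at this
    linarith [h1'.2]
  have n2 : Gamma (I * y + (1 - a)) ≠ 0 := by
    refine Gamma_ne_zero fun m h => ?_
    have := congrArg Complex.im h
    simp at this
    linarith [h1'.2]
  have hr := Gamma_mul_Gamma_one_sub (a - I * y)
  rw [show 1 - (a - I * y) = I * y + (1 - a) by ring] at hr
  have hpi : (Real.pi : ℂ) ≠ 0 := by exact_mod_cast Real.pi_ne_zero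
  have hs : sin (Real.pi * (a - I * y)) ≠ 0 := by
    intro h
    rw [h, div_zero] at hr
    exact mul_ne_zero n1 n2 hr
  have hr2 : Gamma (I * y + (1 - a)) * sin (Real.pi * (a - I * y)) =
      Real.pi / Gamma (a - I * y) := by
    rw [eq_div_iff hs] at hr
    rw [eq_div_iff n1]
    linear_combination hr
  calc _ = exp (-(Real.pi * y)) * 2 * exp E * exp ((a - (1 - a)) * log (I * y)) /
        Gamma (I * y + a) * (Gamma (I * y + (1 - a)) * sin (Real.pi * (a - I * y))) := by ring
    _ = _ := by rw [hr2]; ring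
end

section
/- Let b > 0, let θ₀, θ_t, θ_* ∈ ℝ, and let σ ∈ ℝ with σ ≠ 0. For real Λ > 0 define G(Λ) = e^{−πbΛ} [ −2 cosh(2πb((Λ+θ_*)/2 + θ_t + ib/2)) + 4 ∑_{κ=±1} [ ∏_{ε=±1} cosh(πb(ε(Λ−θ_*)/2 − ib/2 − (Λ+θ_*)/2 − κσ)) · cosh(πb(εθ₀ − ib/2 − θ_t − κσ)) ] / [ sinh(2πb(κσ + ib/2)) · sinh(2πbκσ) ] ]. Define V(s) = 2 e^{−πb(s − ib/2)} cosh(πb(ib/2 + θ_* − s)) · ∏_{ε=±1} cosh(πb(−ib/2 − θ_t + s + εθ₀)) / [ sinh(πb(2s − ib)) · sinh(2πbs) ]. Then, as Λ → +∞, G(Λ) converges to −e^{πb(ib + θ_* + 2θ_t)} + V(σ) + V(−σ). -/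
open Complex Filter

/-- The coefficient function `V(s)` of the dual confluent difference operator
(even index) appearing in Lemma 3.3 of the paper. -/
noncomputable def Vfun (b θ0 θt θs : ℝ) (s : ℝ) : ℂ :=
  2 * Complex.exp (-(Real.pi * b * (s - I * b / 2))) *
    Complex.cosh (Real.pi * b * (I * b / 2 + θs - s)) *
    (Complex.cosh (Real.pi * b * (-(I * b) / 2 - θt + s + θ0)) *
      Complex.cosh (Real.pi * b * (-(I * b) / 2 - θt + s - θ0))) /
    (Complex.sinh (Real.pi * b * (2 * s - I * b)) * Complex.sinh (2 * Real.pi * b * s))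

theorem aux_lim (b : ℝ) (hb : 0 < b) (c : ℂ) :
    Tendsto (fun Λ : ℝ => Complex.exp (-(Real.pi * b * Λ)) * Complex.cosh (Real.pi * b * Λ + c))
      atTop (nhds (Complex.exp c / 2)) := by
  have h1 : Tendsto (fun Λ : ℝ => Real.exp (-(2 * Real.pi * b * Λ))) atTop (nhds 0) := by
    apply Real.tendsto_exp_neg_atTop_nhds_zero.comp
    exact tendsto_id.const_mul_atTop (by positivity)
  have h2 : Tendsto (fun Λ : ℝ => ((Real.exp (-(2 * Real.pi * b * Λ)) : ℝ) : ℂ)) atTop (nhds 0) := by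
    have := (Complex.continuous_ofReal.tendsto 0).comp h1
    rw [Complex.ofReal_zero] at this
    exact this
  have h3 := ((h2.const_mul (Complex.exp (-c))).const_add (Complex.exp c)).div_const 2
  simp only [mul_zero, add_zero] at h3
  refine h3.congr fun Λ => ?_
  rw [Complex.cosh, mul_div_assoc', mul_add, ← Complex.exp_add, ← Complex.exp_add,
    Complex.ofReal_exp, ← Complex.exp_add]
  push_cast
  congr 3 <;> ring_nf

/-- The limit established in the proof of Lemma 3.3 of the paper: `e^{−πbΛ}` times the
potential `H_F⁰` of the Virasoro fusion-kernel difference operator, evaluated at the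
confluent parameter substitution, converges as `Λ → +∞` to the dual potential
`H̃⁰ = −e^{πb(ib+θ_*+2θ_t)} + V(σ) + V(−σ)`. -/
theorem stmt13 (b θ0 θt θs σ : ℝ) (hb : 0 < b) (hσ : σ ≠ 0) :
    Tendsto (fun Λ : ℝ =>
      Complex.exp (-(Real.pi * b * Λ)) *
        (-2 * Complex.cosh (2 * Real.pi * b * ((Λ + θs) / 2 + θt + I * b / 2)) +
          4 * ((Complex.cosh (Real.pi * b * ((Λ - θs) / 2 - I * b / 2 - (Λ + θs) / 2 - σ)) *
                  Complex.cosh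
                    (Real.pi * b * (-((Λ - θs) / 2) - I * b / 2 - (Λ + θs) / 2 - σ)) *
                  (Complex.cosh (Real.pi * b * (θ0 - I * b / 2 - θt - σ)) *
                    Complex.cosh (Real.pi * b * (-θ0 - I * b / 2 - θt - σ)))) /
                (Complex.sinh (2 * Real.pi * b * (σ + I * b / 2)) *
                  Complex.sinh (2 * Real.pi * b * σ)) +
              (Complex.cosh (Real.pi * b * ((Λ - θs) / 2 - I * b / 2 - (Λ + θs) / 2 + σ)) *
                  Complex.cosh
                    (Real.pi * b * (-((Λ - θs) / 2) - I * b / 2 - (Λ + θs) / 2 + σ)) *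
                  (Complex.cosh (Real.pi * b * (θ0 - I * b / 2 - θt + σ)) *
                    Complex.cosh (Real.pi * b * (-θ0 - I * b / 2 - θt + σ)))) /
                (Complex.sinh (2 * Real.pi * b * (-σ + I * b / 2)) *
                  Complex.sinh (2 * Real.pi * b * -σ))))) atTop
      (nhds
        (-Complex.exp (Real.pi * b * (I * b + θs + 2 * θt)) +
          Vfun b θ0 θt θs σ + Vfun b θ0 θt θs (-σ))) := by
  have hA := (aux_lim b hb (Real.pi * b * (I * b + θs + 2 * θt))).const_mul (-2)
  have key : ∀ s : ℝ, Tendsto (fun Λ : ℝ => Complex.exp (-(Real.pi * b * Λ)) *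
      (4 * ((Complex.cosh (Real.pi * b * ((Λ - θs) / 2 - I * b / 2 - (Λ + θs) / 2 + s)) *
                  Complex.cosh
                    (Real.pi * b * (-((Λ - θs) / 2) - I * b / 2 - (Λ + θs) / 2 + s)) *
                  (Complex.cosh (Real.pi * b * (θ0 - I * b / 2 - θt + s)) *
                    Complex.cosh (Real.pi * b * (-θ0 - I * b / 2 - θt + s)))) /
                (Complex.sinh (2 * Real.pi * b * (-s + I * b / 2)) *
                  Complex.sinh (2 * Real.pi * b * -s))))) atTop (nhds (Vfun b θ0 θt θs s)) := by
    intro s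
    have h := (aux_lim b hb (-(Real.pi * b * (s - I * b / 2)))).mul_const
      (4 * Complex.cosh (Real.pi * b * (I * b / 2 + θs - s)) *
        (Complex.cosh (Real.pi * b * (-(I * b) / 2 - θt + s + θ0)) *
          Complex.cosh (Real.pi * b * (-(I * b) / 2 - θt + s - θ0))) /
        (Complex.sinh (Real.pi * b * (2 * s - I * b)) * Complex.sinh (2 * Real.pi * b * s)))
    convert h using 1
    · funext Λ
      have e1 : Complex.cosh (Real.pi * b * ((Λ - θs) / 2 - I * b / 2 - (Λ + θs) / 2 + s)) =
          Complex.cosh (Real.pi * b * (I * b / 2 + θs - s)) := by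
        rw [← Complex.cosh_neg]; congr 1; ring
      have e2 : Complex.cosh (Real.pi * b * (-((Λ - θs) / 2) - I * b / 2 - (Λ + θs) / 2 + s)) =
          Complex.cosh (Real.pi * b * Λ + -(Real.pi * b * (s - I * b / 2))) := by
        rw [← Complex.cosh_neg]; congr 1; ring
      have e3 : (Real.pi * b * (θ0 - I * b / 2 - θt + s) : ℂ) =
          Real.pi * b * (-(I * b) / 2 - θt + s + θ0) := by ring
      have e4 : (Real.pi * b * (-θ0 - I * b / 2 - θt + s) : ℂ) =
          Real.pi * b * (-(I * b) / 2 - θt + s - θ0) := by ring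
      have e5 : (2 * Real.pi * b * (-s + I * b / 2) : ℂ) =
          -(Real.pi * b * (2 * s - I * b)) := by ring
      have e6 : (2 * Real.pi * b * -s : ℂ) = -(2 * Real.pi * b * s) := by ring
      rw [e1, e2, e3, e4, e5, e6, Complex.sinh_neg, Complex.sinh_neg, neg_mul_neg]
      ring
    · rw [Vfun]; congr 1; ring
  have hfin := (hA.add (key σ)).add (key (-σ))
  convert hfin using 1
  · funext Λ
    have e0 : (2 * Real.pi * b * ((Λ + θs) / 2 + θt + I * b / 2) : ℂ) =
        Real.pi * b * Λ + Real.pi * b * (I * b + θs + 2 * θt) := by ring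
    rw [e0]
    simp only [Complex.ofReal_neg, neg_neg, ← sub_eq_add_neg]
    ring
  · congr 1; ring
end

section
/- Let b > 0, let θ₀, θ_t, θ_* ∈ ℝ, and let σ ∈ ℝ with σ ≠ 0. Set α = −e^{−2πb(θ₀ − θ_t + ib/2)}, β = −e^{2πb(θ₀ + θ_t − ib/2)}, γ = −e^{−2πb(θ_* + ib/2)}, q = e^{−2iπb²}, and z = e^{2πbσ}. Then 2 e^{−πb(σ − ib/2)} cosh(πb(ib/2 + θ_* − σ)) · ∏_{ε=±1} cosh(πb(−ib/2 + θ_t + σ + εθ₀)) / [ sinh(πb(2σ − ib)) · sinh(2πbσ) ] = e^{2πb(ib/2 + θ_*/2 − θ_t)} · (1 − αz)(1 − βz)(1 − γz) / [ (1 − z²)(1 − qz²) ]. -/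
open Complex

/-- Equation (5.48) of the paper: the coefficient `V_k(σ,−θ_t)` (even `k`) of the dual
confluent difference operator equals `e^{2πb(ib/2+θ_*/2−θ_t)}` times the coefficient
function `h(α,β,γ;q,z)` of the continuous dual `q`-Hahn difference operator. -/
theorem stmt14 (b θ0 θt θs σ : ℝ) (hb : 0 < b) (hσ : σ ≠ 0) (α β γ q z : ℂ)
    (hα : α = -Complex.exp (-(2 * Real.pi * b * (θ0 - θt + I * b / 2))))
    (hβ : β = -Complex.exp (2 * Real.pi * b * (θ0 + θt - I * b / 2)))
    (hγ : γ = -Complex.exp (-(2 * Real.pi * b * (θs + I * b / 2))))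
    (hq : q = Complex.exp (-(2 * I * Real.pi * b ^ 2)))
    (hz : z = Complex.exp (2 * Real.pi * b * σ)) :
    2 * Complex.exp (-(Real.pi * b * (σ - I * b / 2))) *
        Complex.cosh (Real.pi * b * (I * b / 2 + θs - σ)) *
        (Complex.cosh (Real.pi * b * (-(I * b) / 2 + θt + σ + θ0)) *
          Complex.cosh (Real.pi * b * (-(I * b) / 2 + θt + σ - θ0))) /
        (Complex.sinh (Real.pi * b * (2 * σ - I * b)) * Complex.sinh (2 * Real.pi * b * σ))
      = Complex.exp (2 * Real.pi * b * (I * b / 2 + θs / 2 - θt)) *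
          ((1 - α * z) * (1 - β * z) * (1 - γ * z)) / ((1 - z ^ 2) * (1 - q * z ^ 2)) := by
  have cosh1 : ∀ x : ℂ, Complex.cosh x = Complex.exp (-x) * (1 + Complex.exp (2 * x)) / 2 := by
    intro x
    rw [Complex.cosh, mul_add, ← Complex.exp_add, mul_one, show -x + 2 * x = x by ring, add_comm]
  have sinh1 : ∀ x : ℂ, Complex.sinh x = -(Complex.exp (-x) * (1 - Complex.exp (2 * x)) / 2) := by
    intro x
    rw [Complex.sinh, mul_sub, ← Complex.exp_add, mul_one, show -x + 2 * x = x by ring]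
    ring
  set A : ℂ := Real.pi * b * (I * b / 2 + θs - σ) with hA
  set B : ℂ := Real.pi * b * (-(I * b) / 2 + θt + σ + θ0) with hB
  set C : ℂ := Real.pi * b * (-(I * b) / 2 + θt + σ - θ0) with hC
  set D : ℂ := Real.pi * b * (2 * σ - I * b) with hD
  set E : ℂ := 2 * Real.pi * b * σ with hE
  have h1 : γ * z = -Complex.exp (2 * -A) := by
    rw [hγ, hz, neg_mul, ← Complex.exp_add]
    congr 2
    rw [hA, hE]; ring
  have h2 : β * z = -Complex.exp (2 * B) := by
    rw [hβ, hz, neg_mul, ← Complex.exp_add]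
    congr 2
    rw [hB, hE]; ring
  have h3 : α * z = -Complex.exp (2 * C) := by
    rw [hα, hz, neg_mul, ← Complex.exp_add]
    congr 2
    rw [hC, hE]; ring
  have h4 : z ^ 2 = Complex.exp (2 * E) := by
    rw [hz, sq, ← Complex.exp_add]
    congr 1
    ring
  have h5 : q * z ^ 2 = Complex.exp (2 * D) := by
    rw [h4, hq, ← Complex.exp_add]
    congr 1
    rw [hD, hE]; ring
  have h6 : Complex.exp (2 * Real.pi * b * (I * b / 2 + θs / 2 - θt)) =
      Complex.exp (-(Real.pi * b * (σ - I * b / 2))) * Complex.exp A * Complex.exp (-B) *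
        Complex.exp (-C) * (Complex.exp (-D))⁻¹ * (Complex.exp (-E))⁻¹ := by
    rw [← Complex.exp_neg, ← Complex.exp_neg]
    simp only [← Complex.exp_add]
    congr 1
    rw [hA, hB, hC, hD, hE]; ring
  rw [h1, h2, h3, h5, h4, h6, ← Complex.cosh_neg A, cosh1 (-A), cosh1 B, cosh1 C, sinh1 D,
    sinh1 E, neg_neg]
  simp only [div_eq_mul_inv, mul_inv, inv_neg, inv_inv]
  ring
end

section
/- Let b > 0 and θ₀, θ_t, θ_*, ν ∈ ℝ. Set α = e^{4πbθ₀}, β = e^{−4πbθ_t}, γ = e^{2πb(θ₀ + θ_* − θ_t)}, q = e^{−2iπb²}, and x = −e^{πb(−ib + 2θ₀ + θ_*)} e^{−2πbν}. Then the following two identities hold: (i) −4 e^{πb(θ₀ − θ_t + 2ν)} cosh(πb(ib/2 − θ₀ − θ_*/2 + ν)) cosh(πb(ib/2 + θ_t + θ_*/2 + ν)) = −e^{−2πb(θ₀ − θ_t − ib/2)} x^{−2} · αq(x − 1)(βx − γ); (ii) −4 e^{−πb(θ₀ − θ_t − 2ν)} cosh(πb(ib/2 − θ₀ + θ_*/2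 − ν)) cosh(πb(ib/2 + θ_t − θ_*/2 − ν)) = −e^{−2πb(θ₀ − θ_t − ib/2)} x^{−2} · (x − αq)(x − γq). -/
open Complex

/-- Exponential of an integer combination of five numbers. -/
lemma exp_comb (c a t s n z : ℂ) (i j k l m : ℤ)
    (h : z = i * c + j * a + k * t + l * s + m * n) :
    Complex.exp z = Complex.exp c ^ i * Complex.exp a ^ j * Complex.exp t ^ k *
      Complex.exp s ^ l * Complex.exp n ^ m := by
  rw [h]
  simp only [Complex.exp_add, Complex.exp_int_mul]

/-- The identities (7.37) (even-`k` case) of the paper: the shift coefficients `H±` of the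
confluent fusion-kernel difference operator equal, up to the prefactor
`−e^{−2πb(θ₀−θ_t−ib/2)} x^{−2}`, the coefficients `d⁺ = αq(x−1)(βx−γ)` and
`d⁻ = (x−αq)(x−γq)` of the big `q`-Jacobi difference operator. -/
theorem stmt15 (b θ0 θt θs ν : ℝ) (hb : 0 < b) (α β γ q x : ℂ)
    (hα : α = Complex.exp (4 * Real.pi * b * θ0))
    (hβ : β = Complex.exp (-(4 * Real.pi * b * θt)))
    (hγ : γ = Complex.exp (2 * Real.pi * b * (θ0 + θs - θt)))
    (hq : q = Complex.exp (-(2 * I * Real.pi * b ^ 2)))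
    (hx : x = -Complex.exp (Real.pi * b * (-(I * b) + 2 * θ0 + θs)) *
        Complex.exp (-(2 * Real.pi * b * ν))) :
    (-4 * Complex.exp (Real.pi * b * (θ0 - θt + 2 * ν)) *
        Complex.cosh (Real.pi * b * (I * b / 2 - θ0 - θs / 2 + ν)) *
        Complex.cosh (Real.pi * b * (I * b / 2 + θt + θs / 2 + ν))
      = -Complex.exp (-(2 * Real.pi * b * (θ0 - θt - I * b / 2))) * x ^ (-2 : ℤ) *
          (α * q * (x - 1) * (β * x - γ)))
    ∧ (-4 * Complex.exp (-(Real.pi * b * (θ0 - θt - 2 * ν))) *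
        Complex.cosh (Real.pi * b * (I * b / 2 - θ0 + θs / 2 - ν)) *
        Complex.cosh (Real.pi * b * (I * b / 2 + θt - θs / 2 - ν))
      = -Complex.exp (-(2 * Real.pi * b * (θ0 - θt - I * b / 2))) * x ^ (-2 : ℤ) *
          ((x - α * q) * (x - γ * q))) := by
  have key := exp_comb (Real.pi * b * (I * b / 2)) (Real.pi * b * θ0) (Real.pi * b * θt)
    (Real.pi * b * (θs / 2)) (Real.pi * b * ν)
  have e0 := key (4 * Real.pi * b * θ0) (0) (4) (0) (0) (0) (by push_cast; ring)
  have e1 := key (-(4 * Real.pi * b * θt)) (0) (0) (-4) (0) (0) (by push_cast; ring)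
  have e2 := key (2 * Real.pi * b * (θ0 + θs - θt)) (0) (2) (-2) (4) (0) (by push_cast; ring)
  have e3 := key (-(2 * I * Real.pi * b ^ 2)) (-4) (0) (0) (0) (0) (by push_cast; ring)
  have e4 := key (Real.pi * b * (-(I * b) + 2 * θ0 + θs)) (-2) (2) (0) (2) (0) (by push_cast; ring)
  have e5 := key (-(2 * Real.pi * b * ν)) (0) (0) (0) (0) (-2) (by push_cast; ring)
  have e6 := key (Real.pi * b * (θ0 - θt + 2 * ν)) (0) (1) (-1) (0) (2) (by push_cast; ring)
  have e7 := key (-(Real.pi * b * (θ0 - θt - 2 * ν))) (0) (-1) (1) (0) (2) (by push_cast; ring)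
  have e8 := key (-(2 * Real.pi * b * (θ0 - θt - I * b / 2))) (2) (-2) (2) (0) (0) (by push_cast; ring)
  have e9 := key (Real.pi * b * (I * b / 2 - θ0 - θs / 2 + ν)) (1) (-1) (0) (-1) (1) (by push_cast; ring)
  have e10 := key (-(Real.pi * b * (I * b / 2 - θ0 - θs / 2 + ν))) (-1) (1) (0) (1) (-1) (by push_cast; ring)
  have e11 := key (Real.pi * b * (I * b / 2 + θt + θs / 2 + ν)) (1) (0) (1) (1) (1) (by push_cast; ring)
  have e12 := key (-(Real.pi * b * (I * b / 2 + θt + θs / 2 + ν))) (-1) (0) (-1) (-1) (-1) (by push_cast; ring)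
  have e13 := key (Real.pi * b * (I * b / 2 - θ0 + θs / 2 - ν)) (1) (-1) (0) (1) (-1) (by push_cast; ring)
  have e14 := key (-(Real.pi * b * (I * b / 2 - θ0 + θs / 2 - ν))) (-1) (1) (0) (-1) (1) (by push_cast; ring)
  have e15 := key (Real.pi * b * (I * b / 2 + θt - θs / 2 - ν)) (1) (0) (1) (-1) (-1) (by push_cast; ring)
  have e16 := key (-(Real.pi * b * (I * b / 2 + θt - θs / 2 - ν))) (-1) (0) (-1) (1) (1) (by push_cast; ring)
  clear key
  subst hα hβ hγ hq hx
  simp only [Complex.cosh]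
  rw [e0, e1, e2, e3, e4, e5, e6, e7, e8, e9, e10, e11, e12, e13, e14, e15, e16]
  clear e0 e1 e2 e3 e4 e5 e6 e7 e8 e9 e10 e11 e12 e13 e14 e15 e16
  have hC := Complex.exp_ne_zero (Real.pi * b * (I * b / 2))
  have hA := Complex.exp_ne_zero (Real.pi * b * θ0)
  have hT := Complex.exp_ne_zero (Real.pi * b * θt)
  have hS := Complex.exp_ne_zero (Real.pi * b * (θs / 2))
  have hN := Complex.exp_ne_zero (Real.pi * b * ν)
  generalize Complex.exp (Real.pi * b * (I * b / 2)) = C at *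
  generalize Complex.exp (Real.pi * b * θ0) = A at *
  generalize Complex.exp (Real.pi * b * θt) = T at *
  generalize Complex.exp (Real.pi * b * (θs / 2)) = S at *
  generalize Complex.exp (Real.pi * b * ν) = N at *
  have hneg : ∀ y : ℂ, (-y) ^ (-2 : ℤ) = (y ^ 2)⁻¹ := by
    intro y
    rw [zpow_neg]
    norm_cast
    rw [neg_sq]
  rw [neg_mul (C ^ (-2 : ℤ) * _ * _ * _ * _), hneg]
  constructor
  · field_simp
    ring
  · field_simp
    ring
end

section
/- Let b > 0, let θ₀, θ_t, θ_* ∈ ℝ, let n ≥ 0 be an integer, and set Q = b + b^{−1}, α = −e^{−2πb(θ₀ − θ_t + ib/2)}, β = −e^{2πb(θ₀ + θ_t − ib/2)}, γ = −e^{−2πb(θ_* + ib/2)}, q = e^{−2iπb²}, and ν_n = θ_t − iQ/2 − θ_*/2 − inb. Then the following two identities hold: (i) −4 e^{−πb(θ₀ − θ_t − 2ν_n)} cosh(πb(ib/2 + θ₀ − θ_*/2 + ν_n)) cosh(πb(ib/2 − θ_t + θ_*/2 + ν_n)) = α(1 − q^{n})(1 − βγ q^{n−1}); (ii) −4 e^{πb(θ₀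 − θ_t + 2ν_n)} cosh(πb(ib/2 + θ₀ + θ_*/2 − ν_n)) cosh(πb(ib/2 − θ_t − θ_*/2 − ν_n)) = α^{−1}(1 − αβ q^{n})(1 − αγ q^{n}). -/
open Complex

lemma aux_minus (A x y : ℂ) : -4 * Complex.exp A * Complex.cosh x * Complex.cosh y
    = -Complex.exp (A - x - y) * (1 + Complex.exp (2 * y)) * (1 + Complex.exp (2 * x)) := by
  have hx := Complex.exp_ne_zero x
  have hy := Complex.exp_ne_zero y
  rw [Complex.cosh, Complex.cosh, Complex.exp_sub, Complex.exp_sub, Complex.exp_neg,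
    Complex.exp_neg, two_mul, two_mul, Complex.exp_add, Complex.exp_add]
  field_simp
  ring

lemma exp_half_turn (z : ℂ) : Complex.exp (z - Real.pi * I) = -Complex.exp z := by
  rw [Complex.exp_sub, Complex.exp_pi_mul_I, div_neg, div_one]

/-- The identities (5.42)–(5.43) of the paper (even-index case): the shift coefficients
`H±` of the renormalized confluent fusion-kernel difference operator, evaluated at the
discretized value `ν = ν_n = θ_t − iQ/2 − θ_*/2 − inb`, equal the recurrence coefficients
`b⁻_n = α(1−q^n)(1−βγq^{n−1})` and `b⁺_n = α^{−1}(1−αβq^n)(1−αγq^n)` of the continuous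
dual `q`-Hahn polynomials. -/
theorem stmt17 (b θ0 θt θs : ℝ) (hb : 0 < b) (n : ℕ) (α β γ q νn : ℂ)
    (hα : α = -Complex.exp (-(2 * Real.pi * b * (θ0 - θt + I * b / 2))))
    (hβ : β = -Complex.exp (2 * Real.pi * b * (θ0 + θt - I * b / 2)))
    (hγ : γ = -Complex.exp (-(2 * Real.pi * b * (θs + I * b / 2))))
    (hq : q = Complex.exp (-(2 * I * Real.pi * b ^ 2)))
    (hν : νn = θt - I * (b + b⁻¹) / 2 - θs / 2 - I * n * b) :
    (-4 * Complex.exp (-(Real.pi * b * (θ0 - θt - 2 * νn))) *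
        Complex.cosh (Real.pi * b * (I * b / 2 + θ0 - θs / 2 + νn)) *
        Complex.cosh (Real.pi * b * (I * b / 2 - θt + θs / 2 + νn))
      = α * (1 - q ^ n) * (1 - β * γ * q ^ ((n : ℤ) - 1)))
    ∧ (-4 * Complex.exp (Real.pi * b * (θ0 - θt + 2 * νn)) *
        Complex.cosh (Real.pi * b * (I * b / 2 + θ0 + θs / 2 - νn)) *
        Complex.cosh (Real.pi * b * (I * b / 2 - θt - θs / 2 - νn))
      = α⁻¹ * (1 - α * β * q ^ n) * (1 - α * γ * q ^ n)) := by
  have hb' : (b : ℂ) ≠ 0 := by exact_mod_cast hb.ne'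
  push_cast at hν
  have hqn : q ^ n = Complex.exp (n * (-(2 * I * Real.pi * b ^ 2))) := by
    rw [hq, Complex.exp_nat_mul]
  have hqz : q ^ ((n : ℤ) - 1) = Complex.exp (((n : ℂ) - 1) * (-(2 * I * Real.pi * b ^ 2))) := by
    rw [hq, ← Complex.exp_int_mul]; push_cast; rfl
  have hαi : α⁻¹ = -Complex.exp (2 * Real.pi * b * (θ0 - θt + I * b / 2)) := by
    rw [hα, inv_neg, Complex.exp_neg, inv_inv]
  constructor
  · rw [aux_minus, hqn, hqz, hα, hβ, hγ, neg_mul_neg, ← Complex.exp_add, ← Complex.exp_add,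
      sub_eq_add_neg (1 : ℂ), sub_eq_add_neg (1 : ℂ), hν]
    congr 4
    · congr 1
      ring
    · rw [← exp_half_turn]
      congr 1
      field_simp
      ring
    · rw [← exp_half_turn]
      congr 1
      field_simp
      ring
  · rw [← Complex.cosh_neg (Real.pi * b * (I * b / 2 + θ0 + θs / 2 - νn)),
      ← Complex.cosh_neg (Real.pi * b * (I * b / 2 - θt - θs / 2 - νn)),
      aux_minus, hqn, hαi, hα, hβ, hγ, neg_mul_neg, neg_mul_neg, ← Complex.exp_add,
      ← Complex.exp_add, ← Complex.exp_add, ← Complex.exp_add,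
      sub_eq_add_neg (1 : ℂ), sub_eq_add_neg (1 : ℂ), hν]
    congr 4
    · congr 1
      ring
    · rw [← exp_half_turn]
      congr 1
      field_simp
      ring
    · rw [← exp_half_turn]
      congr 1
      field_simp
      ring
end

section
/- Let b > 0, let θ₀, θ₁, θ_t, θ_∞ ∈ ℝ, and let σ ∈ ℝ with σ ≠ 0. Set α = −e^{2πb(ib/2 + θ₁ + θ_t)}, β = −e^{2πb(ib/2 + θ₀ − θ_∞)}, γ = −e^{2πb(ib/2 − θ₁ + θ_t)}, δ = −e^{2πb(ib/2 + θ₀ + θ_∞)}, q = e^{2iπb²}, and z = e^{2πbσ}. Define C(s) = 4 ∏_{ε=±1} cosh(πb(−ib/2 − θ_t + s + εθ₁)) cosh(πb(−ib/2 − θ₀ + s + εθ_∞)) / [ sinh(2πbs) sinh(πb(−2s + ib)) ]. Then −e^{2πb(ib/2 + θ₀ + θ_t)} · C(−σ) = (1 − αz)(1 − βz)(1 − γz)(1 − δz) / [ (1 − z²)(1 − qz²) ]. -/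
open Complex

/-- The coefficient identity underlying equation (4.13) of the paper:
`−e^{2πb(ib/2+θ₀+θ_t)} C(−σ)` equals the coefficient of `f(qz)` in the Askey–Wilson
`q`-difference operator, under the parameter correspondence (4.6). -/
theorem stmt18 (b θ0 θ1 θt θinf σ : ℝ) (hb : 0 < b) (hσ : σ ≠ 0) (α β γ δ q z : ℂ)
    (hα : α = -Complex.exp (2 * Real.pi * b * (I * b / 2 + θ1 + θt)))
    (hβ : β = -Complex.exp (2 * Real.pi * b * (I * b / 2 + θ0 - θinf)))
    (hγ : γ = -Complex.exp (2 * Real.pi * b * (I * b / 2 - θ1 + θt)))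
    (hδ : δ = -Complex.exp (2 * Real.pi * b * (I * b / 2 + θ0 + θinf)))
    (hq : q = Complex.exp (2 * I * Real.pi * b ^ 2))
    (hz : z = Complex.exp (2 * Real.pi * b * σ)) :
    -Complex.exp (2 * Real.pi * b * (I * b / 2 + θ0 + θt)) *
        (4 * (Complex.cosh (Real.pi * b * (-(I * b) / 2 - θt + -σ + θ1)) *
            Complex.cosh (Real.pi * b * (-(I * b) / 2 - θt + -σ - θ1)) *
            (Complex.cosh (Real.pi * b * (-(I * b) / 2 - θ0 + -σ + θinf)) *
              Complex.cosh (Real.pi * b * (-(I * b) / 2 - θ0 + -σ - θinf)))) /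
          (Complex.sinh (2 * Real.pi * b * -σ) *
            Complex.sinh (Real.pi * b * (-(2 * -σ) + I * b))))
      = (1 - α * z) * (1 - β * z) * (1 - γ * z) * (1 - δ * z) /
          ((1 - z ^ 2) * (1 - q * z ^ 2)) := by
  have hc : ∀ x w : ℂ, -w = Complex.exp (-(2 * x)) →
      Complex.cosh x = Complex.exp x * (1 - w) / 2 := by
    intro x w h
    rw [sub_eq_add_neg, h, mul_add, ← Complex.exp_add, Complex.cosh]
    ring_nf
  have hs : ∀ x w : ℂ, w = Complex.exp (2 * x) →
      Complex.sinh x = -(Complex.exp (-x) * (1 - w) / 2) := by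
    intro x w h
    rw [h, mul_sub, ← Complex.exp_add, Complex.sinh]
    ring_nf
  rw [hc _ (γ * z) (by rw [hγ, hz, neg_mul, neg_neg, ← Complex.exp_add]; congr 1; ring),
    hc _ (α * z) (by rw [hα, hz, neg_mul, neg_neg, ← Complex.exp_add]; congr 1; ring),
    hc _ (β * z) (by rw [hβ, hz, neg_mul, neg_neg, ← Complex.exp_add]; congr 1; ring),
    hc _ (δ * z) (by rw [hδ, hz, neg_mul, neg_neg, ← Complex.exp_add]; congr 1; ring),
    mul_neg (2 * (Real.pi : ℂ) * b) (σ : ℂ), Complex.sinh_neg,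
    hs _ (z ^ 2) (by rw [hz, ← Complex.exp_nat_mul]; congr 1),
    hs _ (q * z ^ 2) (by
      rw [hq, hz, ← Complex.exp_nat_mul, ← Complex.exp_add]; congr 1; push_cast; ring)]
  set E := Complex.exp (2 * Real.pi * b * (I * b / 2 + θ0 + θt)) with hE
  set A1 := Complex.exp (Real.pi * b * (-(I * b) / 2 - θt + -σ + θ1)) with hA1
  set A2 := Complex.exp (Real.pi * b * (-(I * b) / 2 - θt + -σ - θ1)) with hA2
  set A3 := Complex.exp (Real.pi * b * (-(I * b) / 2 - θ0 + -σ + θinf)) with hA3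
  set A4 := Complex.exp (Real.pi * b * (-(I * b) / 2 - θ0 + -σ - θinf)) with hA4
  set B1 := Complex.exp (-(2 * Real.pi * b * σ)) with hB1
  set B2 := Complex.exp (-(Real.pi * b * (-(2 * -σ) + I * b))) with hB2
  have key : E * (A1 * A2 * (A3 * A4)) = B1 * B2 := by
    rw [hE, hA1, hA2, hA3, hA4, hB1, hB2]
    simp only [← Complex.exp_add]
    congr 1
    ring
  have hK : -(B1 * B2) / 4 ≠ 0 := by
    have h1 : B1 ≠ 0 := Complex.exp_ne_zero _
    have h2 : B2 ≠ 0 := Complex.exp_ne_zero _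
    simp [h1, h2]
  rw [← mul_div_mul_left ((1 - α * z) * (1 - β * z) * (1 - γ * z) * (1 - δ * z)) _ hK, ← mul_div_assoc]
  congr 1
  · linear_combination
      (-(1 - α * z) * (1 - β * z) * (1 - γ * z) * (1 - δ * z) / 4) * key
  · ring
end

section
/- Let b > 0 with b² irrational, let θ₀, θ₁, θ_t, θ_∞ ∈ ℝ with θ₀ + θ_t ≠ 0, let n ≥ 0 be an integer, and set Q = b + b^{−1}, α = −e^{2πb(ib/2 + θ₁ + θ_t)}, β = −e^{2πb(ib/2 + θ₀ − θ_∞)}, γ = −e^{2πb(ib/2 − θ₁ + θ_t)}, δ = −e^{2πb(ib/2 + θ₀ + θ_∞)}, q = e^{2iπb²}, σ_n = iQ/2 + θ₀ + θ_t + ibn. Define C(s) = 4 ∏_{ε=±1} cosh(πb(−ib/2 − θ_t + s + εθ₀)) cosh(πb(−ib/2 − θ₁ + s + εθ_∞)) / [ sinh(2πbs) sinh(πb(−2s + ib)) ]. Then C(σ_n) = α(1 − q^{n})(1 − βγ q^{n−1})(1 − βδ q^{n−1})(1 − γδ q^{n−1}) / [ (1 − αβγδ q^{2n−2})(1 − αβγδ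 q^{2n−1}) ] and C(−σ_n) = (1 − αβ q^{n})(1 − αγ q^{n})(1 − αδ q^{n})(1 − αβγδ q^{n−1}) / [ α (1 − αβγδ q^{2n−1})(1 − αβγδ q^{2n}) ]. -/
open Complex

/-- The coefficient `C(s)` of the renormalized Virasoro fusion-kernel difference operator. -/
noncomputable def Cfun (b θ0 θ1 θt θinf : ℝ) (s : ℂ) : ℂ :=
  4 * (Complex.cosh (Real.pi * b * (-(I * b) / 2 - θt + s + θ0)) *
      Complex.cosh (Real.pi * b * (-(I * b) / 2 - θt + s - θ0)) *
      (Complex.cosh (Real.pi * b * (-(I * b) / 2 - θ1 + s + θinf)) *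
        Complex.cosh (Real.pi * b * (-(I * b) / 2 - θ1 + s - θinf)))) /
    (Complex.sinh (2 * Real.pi * b * s) * Complex.sinh (Real.pi * b * (-(2 * s) + I * b)))

theorem aux_cosh (z E : ℂ) (h : Complex.exp z = E) : Complex.cosh z = (E + E⁻¹) / 2 := by
  rw [Complex.cosh, Complex.exp_neg, h]

theorem aux_sinh (z E : ℂ) (h : Complex.exp z = E) : Complex.sinh z = (E - E⁻¹) / 2 := by
  rw [Complex.sinh, Complex.exp_neg, h]

theorem aux_div (K A B N D : ℂ) (hK : K ≠ 0) (hA : A = K * N) (hB : B = K * D) :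
    A / B = N / D := by
  rw [hA, hB, mul_div_mul_left _ _ hK]

/-- Equation (4.12) of the paper: the coefficients `C(±σ_s^{(n)})` of the renormalized
Virasoro fusion-kernel difference operator, evaluated at the discretized internal momentum
`σ_n = iQ/2 + θ₀ + θ_t + ibn`, equal the recurrence coefficients `a⁻_n` and `a⁺_n` of the
Askey–Wilson polynomials, under the parameter correspondence (4.6). -/
theorem stmt19 (b θ0 θ1 θt θinf : ℝ) (hb : 0 < b) (hb2 : Irrational (b ^ 2))
    (hθ : θ0 + θt ≠ 0) (n : ℕ) (α β γ δ q σn : ℂ)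
    (hα : α = -Complex.exp (2 * Real.pi * b * (I * b / 2 + θ1 + θt)))
    (hβ : β = -Complex.exp (2 * Real.pi * b * (I * b / 2 + θ0 - θinf)))
    (hγ : γ = -Complex.exp (2 * Real.pi * b * (I * b / 2 - θ1 + θt)))
    (hδ : δ = -Complex.exp (2 * Real.pi * b * (I * b / 2 + θ0 + θinf)))
    (hq : q = Complex.exp (2 * I * Real.pi * b ^ 2))
    (hσ : σn = I * (b + b⁻¹) / 2 + θ0 + θt + I * b * n) :
    Cfun b θ0 θ1 θt θinf σn
        = α * (1 - q ^ n) * (1 - β * γ * q ^ ((n : ℤ) - 1)) *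
            (1 - β * δ * q ^ ((n : ℤ) - 1)) * (1 - γ * δ * q ^ ((n : ℤ) - 1)) /
            ((1 - α * β * γ * δ * q ^ (2 * (n : ℤ) - 2)) *
              (1 - α * β * γ * δ * q ^ (2 * (n : ℤ) - 1)))
    ∧ Cfun b θ0 θ1 θt θinf (-σn)
        = (1 - α * β * q ^ n) * (1 - α * γ * q ^ n) * (1 - α * δ * q ^ n) *
            (1 - α * β * γ * δ * q ^ ((n : ℤ) - 1)) /
            (α * ((1 - α * β * γ * δ * q ^ (2 * (n : ℤ) - 1)) *
              (1 - α * β * γ * δ * q ^ (2 * n)))) := by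
  have hbc : (b : ℂ) ≠ 0 := by exact_mod_cast hb.ne'
  obtain ⟨h, hh⟩ : ∃ h, h = Complex.exp (I * Real.pi * b ^ 2 / 2) := ⟨_, rfl⟩
  obtain ⟨x0, hx0⟩ : ∃ h, h = Complex.exp (Real.pi * b * θ0) := ⟨_, rfl⟩
  obtain ⟨x1, hx1⟩ : ∃ h, h = Complex.exp (Real.pi * b * θ1) := ⟨_, rfl⟩
  obtain ⟨xt, hxt⟩ : ∃ h, h = Complex.exp (Real.pi * b * θt) := ⟨_, rfl⟩
  obtain ⟨xi, hxi⟩ : ∃ h, h = Complex.exp (Real.pi * b * θinf) := ⟨_, rfl⟩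
  obtain ⟨u, hu⟩ : ∃ h, h = Complex.exp (I * Real.pi * b ^ 2 * n) := ⟨_, rfl⟩
  have nh : h ≠ 0 := hh ▸ Complex.exp_ne_zero _
  have n0 : x0 ≠ 0 := hx0 ▸ Complex.exp_ne_zero _
  have n1 : x1 ≠ 0 := hx1 ▸ Complex.exp_ne_zero _
  have nt : xt ≠ 0 := hxt ▸ Complex.exp_ne_zero _
  have ni : xi ≠ 0 := hxi ▸ Complex.exp_ne_zero _
  have nu : u ≠ 0 := hu ▸ Complex.exp_ne_zero _
  have hI : Complex.exp (Real.pi / 2 * I) = I := Complex.exp_pi_div_two_mul_I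
  have eα : α = -(h ^ 2 * x1 ^ 2 * xt ^ 2) := by
    rw [hα, hh, hx1, hxt, ← Complex.exp_nat_mul, ← Complex.exp_nat_mul, ← Complex.exp_nat_mul,
      ← Complex.exp_add, ← Complex.exp_add]
    congr 2; push_cast; ring
  have eβ : β = -(h ^ 2 * x0 ^ 2 / xi ^ 2) := by
    rw [hβ, hh, hx0, hxi, ← Complex.exp_nat_mul, ← Complex.exp_nat_mul, ← Complex.exp_nat_mul,
      ← Complex.exp_add, ← Complex.exp_sub]
    congr 2; push_cast; ring
  have eγ : γ = -(h ^ 2 * xt ^ 2 / x1 ^ 2) := by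
    rw [hγ, hh, hx1, hxt, ← Complex.exp_nat_mul, ← Complex.exp_nat_mul, ← Complex.exp_nat_mul,
      ← Complex.exp_add, ← Complex.exp_sub]
    congr 2; push_cast; ring
  have eδ : δ = -(h ^ 2 * x0 ^ 2 * xi ^ 2) := by
    rw [hδ, hh, hx0, hxi, ← Complex.exp_nat_mul, ← Complex.exp_nat_mul, ← Complex.exp_nat_mul,
      ← Complex.exp_add, ← Complex.exp_add]
    congr 2; push_cast; ring
  have eq : q = h ^ 4 := by
    rw [hq, hh, ← Complex.exp_nat_mul]
    congr 1; push_cast; ring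
  have nq : q ≠ 0 := by rw [eq]; exact pow_ne_zero _ nh
  have qn : q ^ n = u ^ 2 := by
    rw [hq, hu, ← Complex.exp_nat_mul, ← Complex.exp_nat_mul]
    congr 1; push_cast; ring
  have q2n : q ^ (2 * n) = u ^ 4 := by
    rw [mul_comm, pow_mul, qn]; ring
  have z1 : q ^ ((n : ℤ) - 1) = u ^ 2 / h ^ 4 := by
    rw [zpow_sub₀ nq, zpow_natCast, qn, zpow_one, eq]
  have z2 : q ^ (2 * (n : ℤ) - 1) = u ^ 4 / h ^ 4 := by
    rw [zpow_sub₀ nq, zpow_one, ← eq, ← q2n, ← zpow_natCast q (2 * n)]; push_cast; rfl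
  have z3 : q ^ (2 * (n : ℤ) - 2) = u ^ 4 / h ^ 8 := by
    rw [show h ^ 8 = q ^ (2 : ℤ) by rw [eq]; norm_cast; ring, zpow_sub₀ nq, ← q2n,
      ← zpow_natCast q (2 * n)]; push_cast; rfl
  obtain ⟨S, hS⟩ : ∃ h, h = Complex.exp (Real.pi * b * σn) := ⟨_, rfl⟩
  have eS : S = I * h * x0 * xt * u := by
    rw [← hI, hS, hh, hx0, hxt, hu, ← Complex.exp_add, ← Complex.exp_add, ← Complex.exp_add,
      ← Complex.exp_add, hσ]
    congr 1; push_cast; field_simp; ring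
  have nS : S ≠ 0 := hS ▸ Complex.exp_ne_zero _
  have hc : ∀ (s T y z Y Z : ℂ), Complex.exp (Real.pi * b * s) = T →
      Y = Complex.exp (Real.pi * b * y) → Z = Complex.exp (Real.pi * b * z) →
      Complex.cosh (Real.pi * b * (-(I * b) / 2 - y + s + z))
        = (T * Z / (h * Y) + (T * Z / (h * Y))⁻¹) / 2 ∧
      Complex.cosh (Real.pi * b * (-(I * b) / 2 - y + s - z))
        = (T / (h * Y * Z) + (T / (h * Y * Z))⁻¹) / 2 := by
    intro s T y z Y Z hT hY hZ
    constructor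
    · apply aux_cosh
      rw [← hT, hY, hZ, hh, ← Complex.exp_add, ← Complex.exp_add, ← Complex.exp_sub]
      congr 1; ring
    · apply aux_cosh
      rw [← hT, hY, hZ, hh, ← Complex.exp_add, ← Complex.exp_add, ← Complex.exp_sub]
      congr 1; ring
  have hs : ∀ (s T : ℂ), Complex.exp (Real.pi * b * s) = T →
      Complex.sinh (2 * Real.pi * b * s) = (T ^ 2 - (T ^ 2)⁻¹) / 2 ∧
      Complex.sinh (Real.pi * b * (-(2 * s) + I * b))
        = (h ^ 2 / T ^ 2 - (h ^ 2 / T ^ 2)⁻¹) / 2 := by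
    intro s T hT
    constructor
    · apply aux_sinh
      rw [← hT, ← Complex.exp_nat_mul]
      congr 1; push_cast; ring
    · apply aux_sinh
      rw [← hT, hh, ← Complex.exp_nat_mul, ← Complex.exp_nat_mul, ← Complex.exp_sub]
      congr 1; push_cast; ring
  have hS' : Complex.exp (Real.pi * b * (-σn)) = S⁻¹ := by
    rw [hS, ← Complex.exp_neg]; congr 1; ring
  have I2 : I ^ 2 = -1 := Complex.I_sq
  have I3 : I ^ 3 = -I := by rw [pow_succ, I2]; ring
  have I4 : I ^ 4 = 1 := Complex.I_pow_four
  have I8 : I ^ 8 = 1 := by rw [show 8 = 4 * 2 by norm_num, pow_mul, I4]; ring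
  have S2 : S ^ 2 = -(h * x0 * xt * u) ^ 2 := by
    rw [eS]; linear_combination (h * x0 * xt * u) ^ 2 * I2
  have pair : ∀ A B : ℂ, A ≠ 0 → B ≠ 0 → (A + A⁻¹) / 2 * ((B + B⁻¹) / 2)
      = (A ^ 2 + 1) * (B ^ 2 + 1) / (4 * (A * B)) := by
    intro A B hA hB
    field_simp; ring
  constructor
  · unfold Cfun
    rw [(hc σn S θt θ0 xt x0 hS.symm hxt hx0).1, (hc σn S θt θ0 xt x0 hS.symm hxt hx0).2,
      (hc σn S θ1 θinf x1 xi hS.symm hx1 hxi).1, (hc σn S θ1 θinf x1 xi hS.symm hx1 hxi).2,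
      (hs σn S hS.symm).1, (hs σn S hS.symm).2, z1, z2, z3, qn, eα, eβ, eγ, eδ,
      pair _ _ (by positivity) (by positivity), pair _ _ (by positivity) (by positivity)]
    apply aux_div (-1 / (4 * (h ^ 2 * x0 ^ 4 * xt ^ 4 * u ^ 4)))
    · simp [*]
    · rw [show S * x0 / (h * xt) * (S / (h * xt * x0)) = S ^ 2 / (h * xt) ^ 2 by field_simp,
        show S * xi / (h * x1) * (S / (h * x1 * xi)) = S ^ 2 / (h * x1) ^ 2 by field_simp]
      simp only [div_pow, mul_pow, S2]
      field_simp
      ring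
    · rw [S2]
      field_simp
      ring
  · unfold Cfun
    rw [(hc (-σn) S⁻¹ θt θ0 xt x0 hS' hxt hx0).1, (hc (-σn) S⁻¹ θt θ0 xt x0 hS' hxt hx0).2,
      (hc (-σn) S⁻¹ θ1 θinf x1 xi hS' hx1 hxi).1, (hc (-σn) S⁻¹ θ1 θinf x1 xi hS' hx1 hxi).2,
      (hs (-σn) S⁻¹ hS').1, (hs (-σn) S⁻¹ hS').2, z1, z2, q2n, qn, eα, eβ, eγ, eδ,
      pair _ _ (by positivity) (by positivity), pair _ _ (by positivity) (by positivity)]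
    apply aux_div (1 / (4 * (h ^ 8 * x0 ^ 4 * xt ^ 6 * x1 ^ 2 * u ^ 4)))
    · simp [*]
    · rw [show S⁻¹ * x0 / (h * xt) * (S⁻¹ / (h * xt * x0)) = (S ^ 2)⁻¹ / (h * xt) ^ 2 by
          field_simp,
        show S⁻¹ * xi / (h * x1) * (S⁻¹ / (h * x1 * xi)) = (S ^ 2)⁻¹ / (h * x1) ^ 2 by
          field_simp]
      simp only [div_pow, mul_pow, inv_pow, S2]
      field_simp
      ring
    · rw [inv_pow, S2]
      field_simp
      ring
end
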